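/- arXiv:1901.09752 — 2 statements merged into one kernel-verified Lean document; each statement's English description precedes it below -/
import Mathlib

section
/- Let u : ℝⁿ → ℝ be a C² function with |Du(x)| < 1 for all x ∈ ℝⁿ and sup_{x ∈ ℝⁿ} |Du(x)| < 1, satisfying the maximal surface equation div(Du / √(1 − |Du|²)) = 0 at every point of ℝⁿ. Then u is affine linear, i.e. u(x) = ⟨a, x⟩ + c for some a ∈ ℝⁿ with |a| < 1 and c ∈ ℝ. -/
open scoped RealInnerProductSpace

/-- `j`-th first partial derivative of `u : ℝⁿ → ℝ`. -/
noncomputable def pd {n : ℕ} (u : EuclideanSpace ℝ (Fin n) → ℝ)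
    (x : EuclideanSpace ℝ (Fin n)) (j : Fin n) : ℝ :=
  fderiv ℝ u x (EuclideanSpace.single j 1)

/-- Second partial derivative `u_{x_j x_k}` of `u : ℝⁿ → ℝ`. -/
noncomputable def pd2 {n : ℕ} (u : EuclideanSpace ℝ (Fin n) → ℝ)
    (x : EuclideanSpace ℝ (Fin n)) (j k : Fin n) : ℝ :=
  fderiv ℝ (fun y => fderiv ℝ u y (EuclideanSpace.single j 1)) x (EuclideanSpace.single k 1)

/-!
The maximal surface equation is `div (Φ (∇u)) = 0` for the flux `Φ p = p / √(1 - |p|²)`. On each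
closed ball of radius less than one, `Φ` is Lipschitz and satisfies
`|p - q|² ≤ ⟪p - q, Φ p - Φ q⟫`. As `|∇u| ≤ M < 1`, every increment `u (· + h) - u` is therefore a
bounded entire solution of a linear uniformly elliptic equation in divergence form, hence constant
by the Liouville theorem of De Giorgi, Nash and Moser, and so `∇u` is constant.

For the Liouville theorem, let `0 < v < 1` be such a solution with `v ≥ 1 / 2` on half of the unit
ball. Then `-log v` has energy bounded independently of `v` and lies in `[0, log 2]` on that half,
so Poincaré's inequality bounds it in `L²`. As `-log v` is a subsolution, Moser's iteration of the
Caccioppoli and Sobolev inequalities bounds it from above on a smaller ball. Hence `v` is bounded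
away from zero there, and by scaling the oscillation of a bounded solution on the whole space is at
most a fixed fraction of itself.
-/

open MeasureTheory Set Filter Topology Metric
open scoped ENNReal NNReal

section WeakFormulation

variable {E : Type*} [NormedAddCommGroup E] [NormedSpace ℝ E] [MeasurableSpace E] {μ : Measure E}
  {Λ : ℝ} {v w : E → ℝ} {a b : E → E}

/-- The weak form of `div a = 0`: the field `a` is orthogonal in `L²(μ)` to the differential of
every `C¹` test function. -/
def IsWeaklyDivFree (μ : Measure E) (a : E → E) : Prop :=
  ∀ φ : E → ℝ, ContDiff ℝ 1 φ → HasCompactSupport φ → ∫ x, fderiv ℝ φ x (a x) ∂μ = 0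

/-- `a` is a flux of `v` for some linear elliptic operator `div (A ∇v)`. The coefficients are
recorded only through their effect on `v`, with lower ellipticity constant normalised to `1` and
upper constant `Λ`. -/
structure IsEllipticFlux (Λ : ℝ) (v : E → ℝ) (a : E → E) : Prop where
  contDiff : ContDiff ℝ 1 v
  continuous : Continuous a
  sq_norm_fderiv_le : ∀ x, ‖fderiv ℝ v x‖ ^ 2 ≤ fderiv ℝ v x (a x)
  norm_le : ∀ x, ‖a x‖ ≤ Λ * ‖fderiv ℝ v x‖

/-- Entire weak solution of a linear elliptic equation in divergence form. -/
structure IsEllipticSolution (μ : Measure E) (Λ : ℝ) (v : E → ℝ) (a : E → E) : Prop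
    extends IsEllipticFlux Λ v a where
  isWeaklyDivFree : IsWeaklyDivFree μ a

/-- Entire weak subsolution of a linear elliptic equation in divergence form. -/
structure IsEllipticSubsolution (μ : Measure E) (Λ : ℝ) (w : E → ℝ) (b : E → E) : Prop
    extends IsEllipticFlux Λ w b where
  integral_fderiv_apply_nonpos : ∀ φ : E → ℝ, ContDiff ℝ 1 φ → HasCompactSupport φ →
    (∀ x, 0 ≤ φ x) → ∫ x, fderiv ℝ φ x (b x) ∂μ ≤ 0

end WeakFormulation

section Energy

lemma hasCompactSupport_norm_sq {X F : Type*} [TopologicalSpace X] [NormedAddCommGroup F]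
    {f : X → F} (hf : HasCompactSupport f) : HasCompactSupport fun x => ‖f x‖ ^ 2 :=
  hf.comp_left (g := fun z => ‖z‖ ^ 2) (by simp)

lemma hasCompactSupport_sq {X : Type*} [TopologicalSpace X] {f : X → ℝ}
    (hf : HasCompactSupport f) : HasCompactSupport fun x => f x ^ 2 :=
  hf.comp_left (g := fun z => z ^ 2) (by simp)

lemma integrable_sq_mul {X : Type*} [TopologicalSpace X] [MeasurableSpace X]
    [OpensMeasurableSpace X] {μ : Measure X} [IsFiniteMeasureOnCompacts μ] {f g : X → ℝ}
    (hf : Continuous f) (hfc : HasCompactSupport f) (hg : Continuous g) :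
    Integrable (fun x => f x ^ 2 * g x) μ :=
  ((hf.pow 2).mul hg).integrable_of_hasCompactSupport (hasCompactSupport_sq hfc).mul_right

variable {E : Type*} [NormedAddCommGroup E] [NormedSpace ℝ E]
  {Λ : ℝ} {f v w ψ η : E → ℝ} {a b : E → E}

lemma continuous_norm_fderiv_sq {F : Type*} [NormedAddCommGroup F] [NormedSpace ℝ F] {f : E → F}
    (hf : ContDiff ℝ 1 f) :
    Continuous fun x => ‖fderiv ℝ f x‖ ^ 2 :=
  (hf.continuous_fderiv one_ne_zero).norm.pow 2

lemma hasFDerivAt_of_contDiff {F : Type*} [NormedAddCommGroup F] [NormedSpace ℝ F] {f : E → F}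
    (hf : ContDiff ℝ 1 f) (x : E) : HasFDerivAt f (fderiv ℝ f x) x :=
  (hf.differentiable one_ne_zero x).hasFDerivAt

lemma le_fderiv_sq_mul_apply (hψ : ContDiff ℝ 1 ψ) (hη : ContDiff ℝ 1 η) {x y : E} {F T : ℝ}
    (hF : F ^ 2 ≤ fderiv ℝ ψ x y) (hT : |ψ x| * ‖y‖ ≤ T * F) :
    1 / 2 * (η x ^ 2 * F ^ 2) - 2 * (T ^ 2 * ‖fderiv ℝ η x‖ ^ 2) ≤
      fderiv ℝ (fun x => η x ^ 2 * ψ x) x y := by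
  have hderiv : fderiv ℝ (fun x => η x ^ 2 * ψ x) x y =
      2 * η x * ψ x * fderiv ℝ η x y + η x ^ 2 * fderiv ℝ ψ x y := by
    have h := ((hasFDerivAt_of_contDiff hη x).pow 2).mul (hasFDerivAt_of_contDiff hψ x)
    rw [HasFDerivAt.fderiv (f := fun x => η x ^ 2 * ψ x) h]
    simp
    ring
  have hcross : |2 * η x * ψ x * fderiv ℝ η x y| ≤ 2 * |η x| * (T * F) * ‖fderiv ℝ η x‖ :=
    calc |2 * η x * ψ x * fderiv ℝ η x y|
        = 2 * |η x| * |ψ x| * |fderiv ℝ η x y| := by simp [abs_mul]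
      _ ≤ 2 * |η x| * |ψ x| * (‖fderiv ℝ η x‖ * ‖y‖) := by
          gcongr
          exact (fderiv ℝ η x).le_opNorm y
      _ = 2 * |η x| * (|ψ x| * ‖y‖) * ‖fderiv ℝ η x‖ := by ring
      _ ≤ 2 * |η x| * (T * F) * ‖fderiv ℝ η x‖ := by gcongr
  have hmain : η x ^ 2 * F ^ 2 ≤ η x ^ 2 * fderiv ℝ ψ x y := by gcongr
  rw [hderiv]
  nlinarith [neg_le_of_abs_le hcross, sq_abs (η x),
    sq_nonneg (|η x| * F - 2 * (T * ‖fderiv ℝ η x‖))]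

lemma norm_fderiv_mul_sq_le (hf : ContDiff ℝ 1 f) (hη : ContDiff ℝ 1 η) (x : E) :
    ‖fderiv ℝ (fun x => f x * η x) x‖ ^ 2 ≤
      2 * (η x ^ 2 * ‖fderiv ℝ f x‖ ^ 2) + 2 * (f x ^ 2 * ‖fderiv ℝ η x‖ ^ 2) := by
  have h := (hasFDerivAt_of_contDiff hf x).mul (hasFDerivAt_of_contDiff hη x)
  have htri : ‖fderiv ℝ (fun x => f x * η x) x‖ ≤
      |f x| * ‖fderiv ℝ η x‖ + |η x| * ‖fderiv ℝ f x‖ := by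
    rw [HasFDerivAt.fderiv (f := fun x => f x * η x) h]
    simpa [norm_smul] using norm_add_le (f x • fderiv ℝ η x) (η x • fderiv ℝ f x)
  calc ‖fderiv ℝ (fun x => f x * η x) x‖ ^ 2
      ≤ (|f x| * ‖fderiv ℝ η x‖ + |η x| * ‖fderiv ℝ f x‖) ^ 2 := by gcongr
    _ ≤ 2 * ((|f x| * ‖fderiv ℝ η x‖) ^ 2 + (|η x| * ‖fderiv ℝ f x‖) ^ 2) := add_sq_le
    _ = _ := by simp only [mul_pow, sq_abs]; ring

lemma hasFDerivAt_rpow (hw : ContDiff ℝ 1 w) {q : ℝ} (hq : 1 ≤ q) (x : E) :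
    HasFDerivAt (fun x => w x ^ q) ((q * w x ^ (q - 1)) • fderiv ℝ w x) x :=
  (hasFDerivAt_of_contDiff hw x).rpow_const (Or.inr hq)

lemma contDiff_rpow (hw : ContDiff ℝ 1 w) {q : ℝ} (hq : 1 ≤ q) :
    ContDiff ℝ 1 fun x => w x ^ q :=
  mod_cast hw.rpow_const_of_le (m := 1) (mod_cast hq)

lemma hasFDerivAt_neg_log (hv : ContDiff ℝ 1 v) {x : E} (hx : v x ≠ 0) :
    HasFDerivAt (fun x => -Real.log (v x)) (-(v x)⁻¹ • fderiv ℝ v x) x := by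
  rw [neg_smul]
  exact ((hasFDerivAt_of_contDiff hv x).log hx).neg

lemma hasFDerivAt_neg_inv (hv : ContDiff ℝ 1 v) {x : E} (hx : v x ≠ 0) :
    HasFDerivAt (fun x => -(v x)⁻¹) ((v x ^ 2)⁻¹ • fderiv ℝ v x) x := by
  simpa [Function.comp_def, Pi.neg_def] using
    ((hasDerivAt_inv hx).comp_hasFDerivAt x (hasFDerivAt_of_contDiff hv x)).neg

lemma IsEllipticFlux.neg_log (h : IsEllipticFlux Λ v a) (hv : ∀ x, 0 < v x) :
    IsEllipticFlux Λ (fun x => -Real.log (v x)) (fun x => -(v x)⁻¹ • a x) where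
  contDiff := (h.contDiff.log fun x => (hv x).ne').neg
  continuous := (h.contDiff.continuous.inv₀ fun x => (hv x).ne').neg.smul h.continuous
  sq_norm_fderiv_le x := by
    rw [(hasFDerivAt_neg_log h.contDiff (hv x).ne').fderiv]
    calc ‖-(v x)⁻¹ • fderiv ℝ v x‖ ^ 2
        = (v x)⁻¹ ^ 2 * ‖fderiv ℝ v x‖ ^ 2 := by
          rw [norm_smul, mul_pow, norm_neg, Real.norm_eq_abs, sq_abs]
      _ ≤ (v x)⁻¹ ^ 2 * fderiv ℝ v x (a x) := by gcongr; exact h.sq_norm_fderiv_le x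
      _ = (-(v x)⁻¹ • fderiv ℝ v x) (-(v x)⁻¹ • a x) := by simp; ring
  norm_le x := by
    rw [(hasFDerivAt_neg_log h.contDiff (hv x).ne').fderiv, norm_smul, norm_smul, mul_left_comm]
    gcongr
    exact h.norm_le x

variable [MeasurableSpace E] [BorelSpace E] {μ : Measure E} [IsFiniteMeasureOnCompacts μ]

lemma integrable_fderiv_apply (hf : ContDiff ℝ 1 f) (hfc : HasCompactSupport f)
    (ha : Continuous a) : Integrable (fun x => fderiv ℝ f x (a x)) μ := by
  refine ((hf.continuous_fderiv one_ne_zero).clm_apply ha).integrable_of_hasCompactSupport ?_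
  exact (hfc.fderiv ℝ).mono fun x hx h0 => hx (by simp [h0])

lemma integrable_mul_norm_fderiv_sq {g : E → ℝ} (hg : Continuous g) (hf : ContDiff ℝ 1 f)
    (hfc : HasCompactSupport f) : Integrable (fun x => g x * ‖fderiv ℝ f x‖ ^ 2) μ :=
  (hg.mul (continuous_norm_fderiv_sq hf)).integrable_of_hasCompactSupport
    (hasCompactSupport_norm_sq (hfc.fderiv ℝ)).mul_left

/-- Testing with `η² ψ` where `ψ` is a function of the solution; `F` is the gradient term to be
estimated and `T` the weight it costs. -/
lemma caccioppoli {F T : E → ℝ} (ha : Continuous a) (hψ : ContDiff ℝ 1 ψ) (hη : ContDiff ℝ 1 η)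
    (hηc : HasCompactSupport η) (hFc : Continuous F) (hTc : Continuous T)
    (hF : ∀ x, F x ^ 2 ≤ fderiv ℝ ψ x (a x)) (hT : ∀ x, |ψ x| * ‖a x‖ ≤ T x * F x)
    (htest : ∫ x, fderiv ℝ (fun x => η x ^ 2 * ψ x) x (a x) ∂μ ≤ 0) :
    ∫ x, η x ^ 2 * F x ^ 2 ∂μ ≤ 4 * ∫ x, T x ^ 2 * ‖fderiv ℝ η x‖ ^ 2 ∂μ := by
  have hF_int : Integrable (fun x => 1 / 2 * (η x ^ 2 * F x ^ 2)) μ :=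
    (integrable_sq_mul hη.continuous hηc (hFc.pow 2)).const_mul _
  have hT_int : Integrable (fun x => 2 * (T x ^ 2 * ‖fderiv ℝ η x‖ ^ 2)) μ :=
    (integrable_mul_norm_fderiv_sq (hTc.pow 2) hη hηc).const_mul _
  have htest_int : Integrable (fun x => fderiv ℝ (fun x => η x ^ 2 * ψ x) x (a x)) μ :=
    integrable_fderiv_apply ((hη.pow 2).mul hψ) (hasCompactSupport_sq hηc).mul_right ha
  have h := integral_mono (hF_int.sub hT_int) htest_int fun x =>
    le_fderiv_sq_mul_apply hψ hη (hF x) (hT x)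
  simp only [Pi.sub_apply] at h
  rw [integral_sub hF_int hT_int, integral_const_mul, integral_const_mul] at h
  linarith

lemma integral_norm_fderiv_mul_sq_le (hf : ContDiff ℝ 1 f) (hη : ContDiff ℝ 1 η)
    (hηc : HasCompactSupport η) :
    ∫ x, ‖fderiv ℝ (fun x => f x * η x) x‖ ^ 2 ∂μ ≤
      2 * ∫ x, η x ^ 2 * ‖fderiv ℝ f x‖ ^ 2 ∂μ + 2 * ∫ x, f x ^ 2 * ‖fderiv ℝ η x‖ ^ 2 ∂μ := by
  have h1 : Integrable (fun x => 2 * (η x ^ 2 * ‖fderiv ℝ f x‖ ^ 2)) μ :=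
    (integrable_sq_mul hη.continuous hηc (continuous_norm_fderiv_sq hf)).const_mul _
  have h2 : Integrable (fun x => 2 * (f x ^ 2 * ‖fderiv ℝ η x‖ ^ 2)) μ :=
    (integrable_mul_norm_fderiv_sq (hf.continuous.pow 2) hη hηc).const_mul _
  have h3 : Integrable (fun x => ‖fderiv ℝ (fun x => f x * η x) x‖ ^ 2) μ :=
    (continuous_norm_fderiv_sq (hf.mul hη)).integrable_of_hasCompactSupport
      (hasCompactSupport_norm_sq (HasCompactSupport.fderiv ℝ hηc.mul_left))
  refine (integral_mono h3 (h1.add h2) (norm_fderiv_mul_sq_le hf hη)).trans_eq ?_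
  simp only [Pi.add_apply]
  rw [integral_add h1 h2, integral_const_mul, integral_const_mul]

namespace IsEllipticSolution

lemma energy_le (h : IsEllipticSolution μ Λ v a) (hη : ContDiff ℝ 1 η)
    (hηc : HasCompactSupport η) :
    ∫ x, η x ^ 2 * ‖fderiv ℝ v x‖ ^ 2 ∂μ ≤
      4 * ∫ x, (Λ * |v x|) ^ 2 * ‖fderiv ℝ η x‖ ^ 2 ∂μ := by
  refine caccioppoli h.continuous h.contDiff hη hηc
    (h.contDiff.continuous_fderiv one_ne_zero).norm
    (continuous_const.mul h.contDiff.continuous.abs) h.sq_norm_fderiv_le (fun x => ?_)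
    (h.isWeaklyDivFree _ ((hη.pow 2).mul h.contDiff) (hasCompactSupport_sq hηc).mul_right).le
  calc |v x| * ‖a x‖ ≤ |v x| * (Λ * ‖fderiv ℝ v x‖) := by gcongr; exact h.norm_le x
    _ = Λ * |v x| * ‖fderiv ℝ v x‖ := by ring

lemma isEllipticSubsolution_neg_log (h : IsEllipticSolution μ Λ v a) (hv : ∀ x, 0 < v x) :
    IsEllipticSubsolution μ Λ (fun x => -Real.log (v x)) (fun x => -(v x)⁻¹ • a x) where
  toIsEllipticFlux := h.neg_log hv
  integral_fderiv_apply_nonpos φ hφ hφc hφ0 := by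
    have hψ : ContDiff ℝ 1 fun x => φ x * -(v x)⁻¹ :=
      hφ.mul (h.contDiff.inv fun x => (hv x).ne').neg
    have hψc : HasCompactSupport fun x => φ x * -(v x)⁻¹ := hφc.mul_right
    rw [← h.isWeaklyDivFree _ hψ hψc]
    refine integral_mono (integrable_fderiv_apply hφ hφc (h.neg_log hv).continuous)
      (integrable_fderiv_apply hψ hψc h.continuous) fun x => ?_
    have hderiv := (hasFDerivAt_of_contDiff hφ x).mul
      (hasFDerivAt_neg_inv h.contDiff (hv x).ne')
    have hdrop : 0 ≤ φ x * ((v x ^ 2)⁻¹ * fderiv ℝ v x (a x)) := by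
      have := hφ0 x
      have := (sq_nonneg _).trans (h.sq_norm_fderiv_le x)
      positivity
    calc fderiv ℝ φ x (-(v x)⁻¹ • a x)
        ≤ φ x * ((v x ^ 2)⁻¹ * fderiv ℝ v x (a x)) + fderiv ℝ φ x (-(v x)⁻¹ • a x) :=
          le_add_of_nonneg_left hdrop
      _ = fderiv ℝ (fun x => φ x * -(v x)⁻¹) x (a x) := by
          rw [HasFDerivAt.fderiv (f := fun x => φ x * -(v x)⁻¹) hderiv]
          simp

lemma log_energy_le (h : IsEllipticSolution μ Λ v a) (hv : ∀ x, 0 < v x) (hη : ContDiff ℝ 1 η)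
    (hηc : HasCompactSupport η) :
    ∫ x, η x ^ 2 * ‖fderiv ℝ (fun x => -Real.log (v x)) x‖ ^ 2 ∂μ ≤
      4 * ∫ x, Λ ^ 2 * ‖fderiv ℝ η x‖ ^ 2 ∂μ := by
  have hψ : ContDiff ℝ 1 fun x => -(v x)⁻¹ := (h.contDiff.inv fun x => (hv x).ne').neg
  have hflux := h.neg_log hv
  refine caccioppoli h.continuous hψ hη hηc
    (hflux.contDiff.continuous_fderiv one_ne_zero).norm continuous_const (fun x => ?_)
    (fun x => ?_)
    (h.isWeaklyDivFree _ ((hη.pow 2).mul hψ) (hasCompactSupport_sq hηc).mul_right).le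
  · refine (hflux.sq_norm_fderiv_le x).trans_eq ?_
    rw [(hasFDerivAt_neg_log h.contDiff (hv x).ne').fderiv,
      (hasFDerivAt_neg_inv h.contDiff (hv x).ne').fderiv]
    simp
    ring
  · simpa [norm_smul] using hflux.norm_le x

end IsEllipticSolution

namespace IsEllipticSubsolution

lemma rpow_energy_le (h : IsEllipticSubsolution μ Λ w b) (hw : ∀ x, 0 ≤ w x) {q : ℝ}
    (hq : 1 ≤ q) (hη : ContDiff ℝ 1 η) (hηc : HasCompactSupport η) :
    ∫ x, η x ^ 2 * ‖fderiv ℝ (fun x => w x ^ q) x‖ ^ 2 ∂μ ≤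
      4 * ∫ x, (Λ * w x ^ q) ^ 2 * ‖fderiv ℝ η x‖ ^ 2 ∂μ := by
  have hwq : ContDiff ℝ 1 fun x => w x ^ q := contDiff_rpow h.contDiff hq
  have hψ : ContDiff ℝ 1 fun x => q * w x ^ (2 * q - 1) :=
    contDiff_const.mul (contDiff_rpow h.contDiff (by linarith))
  have hψ0 : ∀ x, 0 ≤ q * w x ^ (2 * q - 1) := fun x => by have := hw x; positivity
  have hnorm : ∀ x, ‖fderiv ℝ (fun x => w x ^ q) x‖ = q * w x ^ (q - 1) * ‖fderiv ℝ w x‖ := by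
    intro x
    have := hw x
    rw [(hasFDerivAt_rpow h.contDiff hq x).fderiv, norm_smul, Real.norm_of_nonneg (by positivity)]
  refine caccioppoli h.continuous hψ hη hηc (hwq.continuous_fderiv one_ne_zero).norm
    (continuous_const.mul hwq.continuous) (fun x => ?_) (fun x => ?_)
    (h.integral_fderiv_apply_nonpos _ ((hη.pow 2).mul hψ) (hasCompactSupport_sq hηc).mul_right
      fun x => mul_nonneg (sq_nonneg _) (hψ0 x))
  · have hpow : (w x ^ (q - 1)) ^ 2 = w x ^ (2 * q - 1 - 1) := by
      rw [← Real.rpow_mul_natCast (hw x)]; congr 1; push_cast; ring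
    have hderiv := (hasFDerivAt_rpow h.contDiff (show 1 ≤ 2 * q - 1 by linarith) x).const_mul q
    have := Real.rpow_nonneg (hw x) (2 * q - 1 - 1)
    rw [hnorm, hderiv.fderiv]
    calc (q * w x ^ (q - 1) * ‖fderiv ℝ w x‖) ^ 2
        = q ^ 2 * w x ^ (2 * q - 1 - 1) * ‖fderiv ℝ w x‖ ^ 2 := by rw [← hpow]; ring
      _ ≤ (q * (2 * q - 1)) * w x ^ (2 * q - 1 - 1) * fderiv ℝ w x (b x) := by
          gcongr
          · exact mul_nonneg (by nlinarith) this
          · nlinarith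
          · exact h.sq_norm_fderiv_le x
      _ = _ := by simp; ring
  · have hpow : w x ^ (2 * q - 1) = w x ^ (q - 1) * w x ^ q := by
      rw [← Real.rpow_add_of_nonneg (hw x) (by linarith) (by linarith)]; congr 1; ring
    rw [abs_of_nonneg (hψ0 x)]
    calc q * w x ^ (2 * q - 1) * ‖b x‖ ≤ q * w x ^ (2 * q - 1) * (Λ * ‖fderiv ℝ w x‖) := by
          gcongr
          · exact hψ0 x
          · exact h.norm_le x
      _ = _ := by rw [hnorm, hpow]; ring

lemma rpow_mul_energy_le (h : IsEllipticSubsolution μ Λ w b) (hw : ∀ x, 0 ≤ w x) {q : ℝ}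
    (hq : 1 ≤ q) (hη : ContDiff ℝ 1 η) (hηc : HasCompactSupport η) :
    ∫ x, ‖fderiv ℝ (fun x => w x ^ q * η x) x‖ ^ 2 ∂μ ≤
      (8 * Λ ^ 2 + 2) * ∫ x, (w x ^ q) ^ 2 * ‖fderiv ℝ η x‖ ^ 2 ∂μ := by
  have hprod := integral_norm_fderiv_mul_sq_le (μ := μ) (contDiff_rpow h.contDiff hq) hη hηc
  have henergy := h.rpow_energy_le hw hq hη hηc
  simp only [mul_pow, mul_assoc, integral_const_mul] at henergy
  linarith

end IsEllipticSubsolution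

end Energy

section Sobolev

variable {E : Type*} [NormedAddCommGroup E] [NormedSpace ℝ E] [FiniteDimensional ℝ E]
  [MeasurableSpace E] [BorelSpace E] (μ : Measure E) [μ.IsAddHaarMeasure]

lemma exists_integral_rpow_le_integral_norm_fderiv_rpow {κ : ℝ}
    (hκ : Real.HolderConjugate (Module.finrank ℝ E) κ) :
    ∃ S, 0 ≤ S ∧ ∀ f : E → ℝ, ContDiff ℝ 1 f → HasCompactSupport f →
      ∫ x, |f x| ^ κ ∂μ ≤ (S * ∫ x, ‖fderiv ℝ f x‖ ∂μ) ^ κ := by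
  have hκ0 : 0 < κ := hκ.symm.pos
  set C := lintegralPowLePowLIntegralFDerivConst μ κ
  refine ⟨(C : ℝ) ^ κ⁻¹, by positivity, fun f hf hfc => ?_⟩
  have hC : (C : ℝ) = ((C : ℝ) ^ κ⁻¹) ^ κ := (Real.rpow_inv_rpow C.2 hκ0.ne').symm
  have hD : Integrable (fun x => ‖fderiv ℝ f x‖) μ :=
    (hf.continuous_fderiv one_ne_zero).norm.integrable_of_hasCompactSupport (hfc.fderiv ℝ).norm
  have hD0 : 0 ≤ ∫ x, ‖fderiv ℝ f x‖ ∂μ := integral_nonneg fun x => norm_nonneg _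
  rw [integral_eq_lintegral_of_nonneg_ae (.of_forall fun x => by positivity)
    (hf.continuous.abs.rpow_const fun x => Or.inr hκ0.le).aestronglyMeasurable]
  refine ENNReal.toReal_le_of_le_ofReal (by positivity) ?_
  calc ∫⁻ x, ENNReal.ofReal (|f x| ^ κ) ∂μ = ∫⁻ x, ‖f x‖ₑ ^ κ ∂μ := by
        simp_rw [← ENNReal.ofReal_rpow_of_nonneg (abs_nonneg _) hκ0.le, Real.enorm_eq_ofReal_abs]
    _ ≤ C * (∫⁻ x, ‖fderiv ℝ f x‖ₑ ∂μ) ^ κ := lintegral_pow_le_pow_lintegral_fderiv μ hf hfc hκ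
    _ = ENNReal.ofReal (C * (∫ x, ‖fderiv ℝ f x‖ ∂μ) ^ κ) := by
        rw [ENNReal.ofReal_mul C.coe_nonneg, ENNReal.ofReal_coe_nnreal,
          ← ENNReal.ofReal_rpow_of_nonneg hD0 hκ0.le,
          ofReal_integral_eq_lintegral_ofReal hD (.of_forall fun x => norm_nonneg _)]
        simp_rw [ofReal_norm]
    _ = ENNReal.ofReal (((C : ℝ) ^ κ⁻¹ * ∫ x, ‖fderiv ℝ f x‖ ∂μ) ^ κ) := by
        rw [Real.mul_rpow (by positivity) hD0, ← hC]

lemma exists_integral_sq_rpow_le {κ : ℝ} (hκ : Real.HolderConjugate (Module.finrank ℝ E) κ) :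
    ∃ S, 0 ≤ S ∧ ∀ g : E → ℝ, ContDiff ℝ 1 g → HasCompactSupport g →
      ∫ x, (g x ^ 2) ^ κ ∂μ ≤ (S * (∫ x, g x ^ 2 ∂μ + ∫ x, ‖fderiv ℝ g x‖ ^ 2 ∂μ)) ^ κ := by
  obtain ⟨S, hS0, hS⟩ := exists_integral_rpow_le_integral_norm_fderiv_rpow μ hκ
  have hκ0 : 0 < κ := hκ.symm.pos
  refine ⟨S, hS0, fun g hg hgc => ?_⟩
  have hg2 : Integrable (fun x => g x ^ 2) μ :=
    (hg.continuous.pow 2).integrable_of_hasCompactSupport (hasCompactSupport_sq hgc)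
  have hDg2 : Integrable (fun x => ‖fderiv ℝ g x‖ ^ 2) μ :=
    (continuous_norm_fderiv_sq hg).integrable_of_hasCompactSupport
      (hasCompactSupport_norm_sq (hgc.fderiv ℝ))
  have hderiv : ∀ x, ‖fderiv ℝ (fun x => g x ^ 2) x‖ ≤ g x ^ 2 + ‖fderiv ℝ g x‖ ^ 2 := by
    intro x
    have h := (hasFDerivAt_of_contDiff hg x).pow 2
    rw [HasFDerivAt.fderiv (f := fun x => g x ^ 2) h, norm_smul, ← sq_abs (g x)]
    simpa [abs_mul] using two_mul_le_add_sq |g x| ‖fderiv ℝ g x‖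
  have hmono : ∫ x, ‖fderiv ℝ (fun x => g x ^ 2) x‖ ∂μ ≤
      ∫ x, g x ^ 2 ∂μ + ∫ x, ‖fderiv ℝ g x‖ ^ 2 ∂μ := by
    rw [← integral_add hg2 hDg2]
    exact integral_mono_of_nonneg (.of_forall fun x => norm_nonneg _) (hg2.add hDg2)
      (.of_forall hderiv)
  calc ∫ x, (g x ^ 2) ^ κ ∂μ = ∫ x, |g x ^ 2| ^ κ ∂μ := by simp only [abs_sq]
    _ ≤ (S * ∫ x, ‖fderiv ℝ (fun x => g x ^ 2) x‖ ∂μ) ^ κ :=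
        hS _ (hg.pow 2) (hasCompactSupport_sq hgc)
    _ ≤ _ := by gcongr

end Sobolev

section Moser

lemma rpow_sq {t : ℝ} (ht : 0 ≤ t) (q : ℝ) : (t ^ q) ^ 2 = t ^ (2 * q) := by
  rw [← Real.rpow_mul_natCast ht, mul_comm q, Nat.cast_ofNat]

section MoserIntegral

variable {X : Type*} [MeasurableSpace X] {μ : Measure X} {w η : X → ℝ}

/-- The integral controlled by Moser iteration, with independent powers `q` of the subsolution `w`
and `t` of the cutoff `η`. -/
noncomputable def moserIntegral (μ : Measure X) (w η : X → ℝ) (q t : ℝ) : ℝ :=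
  ∫ x, w x ^ (2 * q) * η x ^ (2 * t) ∂μ

lemma moserIntegral_nonneg (hw : ∀ x, 0 ≤ w x) (hη : ∀ x, 0 ≤ η x) (q t : ℝ) :
    0 ≤ moserIntegral μ w η q t :=
  integral_nonneg fun x => mul_nonneg (Real.rpow_nonneg (hw x) _) (Real.rpow_nonneg (hη x) _)

lemma integral_rpow_mul_rpow_sq_rpow (hw : ∀ x, 0 ≤ w x) (hη : ∀ x, 0 ≤ η x) (q s κ : ℝ) :
    ∫ x, ((w x ^ q * η x ^ s) ^ 2) ^ κ ∂μ = moserIntegral μ w η (κ * q) (κ * s) := by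
  refine integral_congr_ae (.of_forall fun x => ?_)
  have hwx := hw x
  have hηx := hη x
  simp only [mul_pow, rpow_sq hwx, rpow_sq hηx]
  rw [Real.mul_rpow (by positivity) (by positivity), ← Real.rpow_mul hwx, ← Real.rpow_mul hηx]
  ring_nf

variable [TopologicalSpace X] [OpensMeasurableSpace X] [IsFiniteMeasureOnCompacts μ]

lemma integrable_rpow_mul_rpow (hw : Continuous w) (hη : Continuous η)
    (hηc : HasCompactSupport η) {q t : ℝ} (hq : 0 ≤ q) (ht : 0 < t) :
    Integrable (fun x => w x ^ q * η x ^ t) μ := by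
  refine Continuous.integrable_of_hasCompactSupport
    ((hw.rpow_const fun _ => Or.inr hq).mul (hη.rpow_const fun _ => Or.inr ht.le)) ?_
  exact (hηc.comp_left (g := fun z : ℝ => z ^ t) (Real.zero_rpow ht.ne')).mul_left

lemma integral_rpow_mul_rpow_sq_le (hw : Continuous w) (hw0 : ∀ x, 0 ≤ w x) (hη : Continuous η)
    (hηc : HasCompactSupport η) (hη0 : ∀ x, 0 ≤ η x) (hη1 : ∀ x, η x ≤ 1)
    {q s : ℝ} (hq : 0 ≤ q) (hs : 1 < s) :
    ∫ x, (w x ^ q * η x ^ s) ^ 2 ∂μ ≤ moserIntegral μ w η q (s - 1) := by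
  refine integral_mono_of_nonneg (.of_forall fun x => sq_nonneg _)
    (integrable_rpow_mul_rpow hw hη hηc (by positivity) (by linarith)) (.of_forall fun x => ?_)
  have := hw0 x
  simp only [mul_pow, rpow_sq (hw0 x), rpow_sq (hη0 x)]
  gcongr ?_ * ?_
  exact Real.rpow_le_rpow_of_exponent_ge_of_imp (hη0 x) (hη1 x) (by linarith)
    fun _ h0 => by linarith

end MoserIntegral

lemma norm_fderiv_rpow_sq_le {E : Type*} [NormedAddCommGroup E] [NormedSpace ℝ E] {η : E → ℝ}
    {s G : ℝ} (hη : ContDiff ℝ 1 η) (hη0 : ∀ x, 0 ≤ η x) (hG : ∀ x, ‖fderiv ℝ η x‖ ≤ G)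
    (hs : 1 ≤ s) (x : E) :
    ‖fderiv ℝ (fun x => η x ^ s) x‖ ^ 2 ≤ s ^ 2 * G ^ 2 * η x ^ (2 * (s - 1)) := by
  have hηx := hη0 x
  have hGx := hG x
  rw [(hasFDerivAt_rpow hη hs x).fderiv, norm_smul, Real.norm_of_nonneg (by positivity),
    ← rpow_sq hηx, ← mul_pow, ← mul_pow]
  calc (s * η x ^ (s - 1) * ‖fderiv ℝ η x‖) ^ 2 ≤ (s * η x ^ (s - 1) * G) ^ 2 := by gcongr
    _ = _ := by ring

section Subsolution

variable {E : Type*} [NormedAddCommGroup E] [NormedSpace ℝ E] [MeasurableSpace E] [BorelSpace E]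
  {μ : Measure E} [IsFiniteMeasureOnCompacts μ] {Λ G q s : ℝ} {w η : E → ℝ} {b : E → E}

lemma IsEllipticSubsolution.rpow_mul_rpow_energy_le (h : IsEllipticSubsolution μ Λ w b)
    (hw0 : ∀ x, 0 ≤ w x) (hη : ContDiff ℝ 1 η) (hηc : HasCompactSupport η)
    (hη0 : ∀ x, 0 ≤ η x) (hG : ∀ x, ‖fderiv ℝ η x‖ ≤ G) (hq : 1 ≤ q) (hs : 1 < s) :
    ∫ x, ‖fderiv ℝ (fun x => w x ^ q * η x ^ s) x‖ ^ 2 ∂μ ≤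
      (8 * Λ ^ 2 + 2) * (s ^ 2 * G ^ 2 * moserIntegral μ w η q (s - 1)) := by
  have hηs : HasCompactSupport fun x => η x ^ s :=
    hηc.comp_left (g := fun z : ℝ => z ^ s) (Real.zero_rpow (by linarith))
  refine (h.rpow_mul_energy_le hw0 hq (contDiff_rpow hη hs.le) hηs).trans ?_
  gcongr
  rw [moserIntegral, ← integral_const_mul]
  refine integral_mono_of_nonneg (.of_forall fun x => by positivity)
    ((integrable_rpow_mul_rpow h.contDiff.continuous hη.continuous hηc (by linarith)
      (by linarith)).const_mul _) (.of_forall fun x => ?_)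
  have hwx := hw0 x
  calc (w x ^ q) ^ 2 * ‖fderiv ℝ (fun x => η x ^ s) x‖ ^ 2
      ≤ w x ^ (2 * q) * (s ^ 2 * G ^ 2 * η x ^ (2 * (s - 1))) := by
        rw [rpow_sq hwx]
        gcongr
        exact norm_fderiv_rpow_sq_le hη hη0 hG hs.le x
    _ = s ^ 2 * G ^ 2 * (w x ^ (2 * q) * η x ^ (2 * (s - 1))) := by ring

lemma IsEllipticSubsolution.sobolev_energy_le (h : IsEllipticSubsolution μ Λ w b)
    (hw0 : ∀ x, 0 ≤ w x) (hη : ContDiff ℝ 1 η) (hηc : HasCompactSupport η)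
    (hη0 : ∀ x, 0 ≤ η x) (hη1 : ∀ x, η x ≤ 1) (hG : ∀ x, ‖fderiv ℝ η x‖ ≤ G) (hq : 1 ≤ q)
    (hs : 1 < s) :
    ∫ x, (w x ^ q * η x ^ s) ^ 2 ∂μ + ∫ x, ‖fderiv ℝ (fun x => w x ^ q * η x ^ s) x‖ ^ 2 ∂μ ≤
      (1 + (8 * Λ ^ 2 + 2) * (s ^ 2 * G ^ 2)) * moserIntegral μ w η q (s - 1) := by
  have hL2 := integral_rpow_mul_rpow_sq_le (μ := μ) h.contDiff.continuous hw0 hη.continuous hηc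
    hη0 hη1 (by linarith : 0 ≤ q) hs
  have henergy := h.rpow_mul_rpow_energy_le hw0 hη hηc hη0 hG hq hs
  linarith

end Subsolution

/-- With `N` the dimension and `κ = N / (N - 1)`, the exponent `q (N + 1) - N` of the cutoff is
the one for which the gain of the Sobolev inequality reproduces the same expression at `κ q`. -/
lemma exists_moserIntegral_le_rpow {E : Type*} [NormedAddCommGroup E] [NormedSpace ℝ E]
    [FiniteDimensional ℝ E] [MeasurableSpace E] [BorelSpace E] (μ : Measure E)
    [μ.IsAddHaarMeasure] (Λ : ℝ) {N κ : ℝ} (hN : N = Module.finrank ℝ E)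
    (hκ : Real.HolderConjugate N κ) {c : E} (η : ContDiffBump c) :
    ∃ K, 1 ≤ K ∧ ∀ (w : E → ℝ) (b : E → E), IsEllipticSubsolution μ Λ w b → (∀ x, 0 ≤ w x) →
      ∀ q, 1 ≤ q → moserIntegral μ w η (κ * q) (κ * q * (N + 1) - N) ≤
        (K * q ^ 2 * moserIntegral μ w η q (q * (N + 1) - N)) ^ κ := by
  have hη : ContDiff ℝ 1 η := η.contDiff
  obtain ⟨G, hG⟩ := (η.hasCompactSupport.fderiv ℝ).exists_bound_of_continuous
    (hη.continuous_fderiv one_ne_zero)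
  obtain ⟨S, hS0, hS⟩ := exists_integral_sq_rpow_le μ (hN ▸ hκ)
  refine ⟨max 1 (S * (1 + (8 * Λ ^ 2 + 2) * ((N + 1) ^ 2 * G ^ 2))), le_max_left _ _,
    fun w b h hw q hq => ?_⟩
  have hN1 : 1 < N := hκ.lt
  have hκ0 : 0 < κ := hκ.symm.pos
  set s := q * (N + 1) - N + 1
  have hs1 : 1 < s := by nlinarith
  have hηs : HasCompactSupport fun x => η x ^ s :=
    η.hasCompactSupport.comp_left (g := fun z : ℝ => z ^ s) (Real.zero_rpow (by linarith))
  have hs_sub : q * (N + 1) - N = s - 1 := by ring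
  have hs_mul : κ * q * (N + 1) - N = κ * s := by linear_combination hκ.sub_one_mul_conj
  rw [hs_sub, hs_mul, ← integral_rpow_mul_rpow_sq_rpow hw fun _ => η.nonneg]
  refine (hS _ ((contDiff_rpow h.contDiff hq).mul (contDiff_rpow hη hs1.le)) hηs.mul_left).trans ?_
  have hJ : 0 ≤ moserIntegral μ w η q (s - 1) :=
    moserIntegral_nonneg hw (fun _ => η.nonneg) q (s - 1)
  gcongr ?_ ^ κ
  have henergy := h.sobolev_energy_le hw hη η.hasCompactSupport (fun _ => η.nonneg)
    (fun _ => η.le_one) hG hq hs1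
  have hconst : 1 + (8 * Λ ^ 2 + 2) * (s ^ 2 * G ^ 2) ≤
      (1 + (8 * Λ ^ 2 + 2) * ((N + 1) ^ 2 * G ^ 2)) * q ^ 2 :=
    calc _ ≤ q ^ 2 + (8 * Λ ^ 2 + 2) * ((q * (N + 1)) ^ 2 * G ^ 2) := by
          gcongr
          · nlinarith
          · linarith
      _ = _ := by ring
  calc _ ≤ S * ((1 + (8 * Λ ^ 2 + 2) * (s ^ 2 * G ^ 2)) * moserIntegral μ w η q (s - 1)) := by
        gcongr
    _ ≤ S * ((1 + (8 * Λ ^ 2 + 2) * ((N + 1) ^ 2 * G ^ 2)) * q ^ 2 *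
          moserIntegral μ w η q (s - 1)) := by gcongr
    _ = S * (1 + (8 * Λ ^ 2 + 2) * ((N + 1) ^ 2 * G ^ 2)) * q ^ 2 *
          moserIntegral μ w η q (s - 1) := by ring
    _ ≤ _ := by gcongr; exact le_max_right _ _

lemma exists_le_rpow_pow_of_le_mul_rpow {κ K m : ℝ} (hκ : 1 < κ) (hK : 1 ≤ K) (hm : 0 < m) :
    ∃ A, 0 < A ∧ ∀ I : ℕ → ℝ, (∀ k, 0 ≤ I k) → I 0 ≤ m →
      (∀ k, I (k + 1) ≤ (K * (κ ^ k) ^ 2 * I k) ^ κ) → ∀ k, I k ≤ A ^ κ ^ k := by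
  have hκ1 : 0 < κ - 1 := by linarith
  set β := κ * (2 * Real.log κ) / (κ - 1)
  set γ := (β + κ * Real.log K) / (κ - 1)
  have hβ0 : 0 ≤ β := by have := Real.log_pos hκ; positivity
  have hγ0 : 0 ≤ γ := by have := Real.log_nonneg hK; positivity
  refine ⟨Real.exp (γ + Real.log m), Real.exp_pos _, fun I hI0 hIm hI k => ?_⟩
  suffices h : I k ≤ Real.exp (κ ^ k * (γ + Real.log m) - β * k - γ) by
    rw [← Real.exp_mul, mul_comm]
    exact h.trans (Real.exp_le_exp.2 (by linarith [mul_nonneg hβ0 k.cast_nonneg]))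
  induction k with
  | zero => simpa [Real.exp_log hm] using hIm
  | succ k ih =>
    have hfactor : K * (κ ^ k) ^ 2 = Real.exp (Real.log K + 2 * Real.log κ * k) := by
      have hlog : 2 * Real.log κ * k = Real.log ((κ ^ k) ^ 2) := by
        rw [Real.log_pow, Real.log_pow]
        push_cast
        ring
      rw [hlog, Real.exp_add, Real.exp_log (by linarith), Real.exp_log (by positivity)]
    refine (hI k).trans ?_
    have := hI0 k
    calc (K * (κ ^ k) ^ 2 * I k) ^ κ
        ≤ (K * (κ ^ k) ^ 2 * Real.exp (κ ^ k * (γ + Real.log m) - β * k - γ)) ^ κ := by gcongr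
      _ = Real.exp (κ ^ (k + 1) * (γ + Real.log m) - β * ↑(k + 1) - γ) := by
        rw [hfactor, ← Real.exp_add, ← Real.exp_mul]
        have hβκ : β * (κ - 1) = κ * (2 * Real.log κ) := div_mul_cancel₀ _ hκ1.ne'
        have hγκ : γ * (κ - 1) = β + κ * Real.log K := div_mul_cancel₀ _ hκ1.ne'
        push_cast
        congr 1
        linear_combination -(k : ℝ) * hβκ - hγκ

end Moser

section LocalMaximumPrinciple

lemma le_of_setIntegral_rpow_le {X : Type*} [TopologicalSpace X] [MeasurableSpace X]
    [OpensMeasurableSpace X] {μ : Measure X} [μ.IsOpenPosMeasure] {f : X → ℝ} {U : Set X}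
    {p : ℕ → ℝ} {A : ℝ} (hf : Continuous f) (hf0 : ∀ x, 0 ≤ f x) (hU : IsOpen U)
    (hμU : μ U ≠ ∞) (hA : 0 ≤ A) (hp : Tendsto p atTop atTop) (hp0 : ∀ k, 0 ≤ p k)
    (hint : ∀ k, IntegrableOn (fun x => f x ^ p k) U μ)
    (hle : ∀ k, ∫ x in U, f x ^ p k ∂μ ≤ A ^ p k) {x : X} (hx : x ∈ U) : f x ≤ A := by
  by_contra! hAx
  obtain ⟨c, hAc, hcx⟩ := exists_between hAx
  have hc : 0 < c := hA.trans_lt hAc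
  set V := U ∩ {y | c < f y}
  have hV : IsOpen V := hU.inter (isOpen_lt continuous_const hf)
  have hμV : μ V ≠ ∞ := measure_ne_top_of_subset inter_subset_left hμU
  have hV0 : 0 < μ.real V := ENNReal.toReal_pos (hV.measure_pos μ ⟨x, hx, hcx⟩).ne' hμV
  have hVle : ∀ k, μ.real V ≤ (A / c) ^ p k := fun k => by
    rw [Real.div_rpow hA hc.le, le_div_iff₀ (by positivity)]
    calc μ.real V * c ^ p k = ∫ _ in V, c ^ p k ∂μ := by rw [setIntegral_const, smul_eq_mul]
      _ ≤ ∫ y in V, f y ^ p k ∂μ :=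
          setIntegral_mono_on (integrableOn_const hμV) ((hint k).mono_set inter_subset_left)
            hV.measurableSet fun y hy => Real.rpow_le_rpow hc.le (le_of_lt hy.2) (hp0 k)
      _ ≤ ∫ y in U, f y ^ p k ∂μ :=
          setIntegral_mono_set (hint k) (.of_forall fun y => Real.rpow_nonneg (hf0 y) _)
            (.of_forall inter_subset_left)
      _ ≤ A ^ p k := hle k
  have hlim : Tendsto (fun k => (A / c) ^ p k) atTop (𝓝 0) :=
    (tendsto_rpow_atTop_of_base_lt_one _ (by have := div_nonneg hA hc.le; linarith)
      ((div_lt_one hc).2 hAc)).comp hp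
  exact hV0.not_ge (ge_of_tendsto' hlim hVle)

variable {E : Type*} [NormedAddCommGroup E] [NormedSpace ℝ E] [FiniteDimensional ℝ E]
  [MeasurableSpace E] [BorelSpace E] {c : E}

lemma moserIntegral_one_one_le {μ : Measure E} [IsFiniteMeasureOnCompacts μ] {w : E → ℝ}
    (hw : Continuous w) (η : ContDiffBump c) :
    moserIntegral μ w η 1 1 ≤ ∫ x in ball c η.rOut, w x ^ 2 ∂μ := by
  have hint : IntegrableOn (fun x => w x ^ 2) (ball c η.rOut) μ :=
    ((hw.pow 2).continuousOn.integrableOn_compact (isCompact_closedBall c η.rOut)).mono_set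
      ball_subset_closedBall
  simp only [moserIntegral, mul_one, Real.rpow_two]
  rw [← integral_indicator measurableSet_ball]
  refine integral_mono_of_nonneg (.of_forall fun x => by positivity)
    (hint.integrable_indicator measurableSet_ball) (.of_forall fun x => ?_)
  by_cases hx : x ∈ ball c η.rOut
  · simpa [hx] using mul_le_of_le_one_right (sq_nonneg (w x)) (pow_le_one₀ η.nonneg η.le_one)
  · have hηx : η x = 0 := by rwa [← η.support_eq, Function.notMem_support] at hx
    simp [hx, hηx]

lemma setIntegral_sq_rpow_le_moserIntegral {μ : Measure E} [IsFiniteMeasureOnCompacts μ]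
    {w : E → ℝ} (hw : Continuous w) (hw0 : ∀ x, 0 ≤ w x) (η : ContDiffBump c) {q t : ℝ}
    (hq : 0 ≤ q) (ht : 0 < t) :
    ∫ x in ball c η.rIn, (w x ^ 2) ^ q ∂μ ≤ moserIntegral μ w η q t := by
  have hint : Integrable (fun x => w x ^ (2 * q) * η x ^ (2 * t)) μ :=
    integrable_rpow_mul_rpow hw η.continuous η.hasCompactSupport (by positivity) (by positivity)
  calc ∫ x in ball c η.rIn, (w x ^ 2) ^ q ∂μ
      = ∫ x in ball c η.rIn, w x ^ (2 * q) * η x ^ (2 * t) ∂μ := by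
        refine setIntegral_congr_fun measurableSet_ball fun x hx => ?_
        rw [η.one_of_mem_closedBall (ball_subset_closedBall hx), Real.one_rpow, mul_one,
          Real.rpow_mul (hw0 x), Real.rpow_two]
    _ ≤ moserIntegral μ w η q t :=
        setIntegral_le_integral hint (.of_forall fun x =>
          mul_nonneg (Real.rpow_nonneg (hw0 x) _) (Real.rpow_nonneg η.nonneg _))

lemma exists_forall_le_of_isEllipticSubsolution (μ : Measure E) [μ.IsAddHaarMeasure]
    (hn : 2 ≤ Module.finrank ℝ E) (Λ : ℝ) {m : ℝ} (hm : 0 < m) (η : ContDiffBump c) :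
    ∃ C, ∀ (w : E → ℝ) (b : E → E), IsEllipticSubsolution μ Λ w b → (∀ x, 0 ≤ w x) →
      ∫ x in ball c η.rOut, w x ^ 2 ∂μ ≤ m → ∀ x ∈ ball c η.rIn, w x ≤ C := by
  obtain ⟨N, hN⟩ : ∃ N : ℝ, N = Module.finrank ℝ E := ⟨_, rfl⟩
  have hN2 : 2 ≤ N := by rw [hN]; exact_mod_cast hn
  have hκ : Real.HolderConjugate N (Real.conjExponent N) := .conjExponent (by linarith)
  set κ := Real.conjExponent N
  have hκ1 : 1 < κ := hκ.symm.lt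
  have hκk : ∀ k : ℕ, 1 ≤ κ ^ k := fun k => one_le_pow₀ hκ1.le
  obtain ⟨K, hK, hstep⟩ := exists_moserIntegral_le_rpow μ Λ hN hκ η
  obtain ⟨A, hA, hiter⟩ := exists_le_rpow_pow_of_le_mul_rpow hκ1 hK hm
  refine ⟨√A, fun w b h hw hwm x hx => Real.le_sqrt_of_sq_le ?_⟩
  have hw_cont : Continuous w := h.contDiff.continuous
  have hbound : ∀ k : ℕ, moserIntegral μ w η (κ ^ k) (κ ^ k * (N + 1) - N) ≤ A ^ κ ^ k := by
    refine hiter _ (fun k => moserIntegral_nonneg hw (fun _ => η.nonneg) _ _) ?_ fun k => ?_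
    · have := moserIntegral_one_one_le (μ := μ) hw_cont η
      simpa using this.trans hwm
    · simpa only [pow_succ'] using hstep w b h hw (κ ^ k) (hκk k)
  refine le_of_setIntegral_rpow_le (μ := μ) (hw_cont.pow 2) (fun x => sq_nonneg _) isOpen_ball
    measure_ball_lt_top.ne hA.le (tendsto_pow_atTop_atTop_of_one_lt hκ1)
    (fun k => by positivity) (fun k => ?_) (fun k => ?_) hx
  · exact (((hw_cont.pow 2).rpow_const fun _ => Or.inr (by positivity)).continuousOn
      |>.integrableOn_compact (isCompact_closedBall c η.rIn)).mono_set ball_subset_closedBall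
  · exact (setIntegral_sq_rpow_le_moserIntegral hw_cont hw η (by positivity)
      (by nlinarith [hκk k])).trans (hbound k)

end LocalMaximumPrinciple

section Poincare

lemma mul_setLIntegral_sq_le {X : Type*} [MeasurableSpace X] {μ : Measure X} {B S : Set X}
    (hBf : μ B ≠ ∞) (hS : MeasurableSet S) (hSB : S ⊆ B) {g : X → ℝ} {c : ℝ}
    (hg : ∀ x ∈ S, |g x| ≤ c) :
    μ S * ∫⁻ x in B, ENNReal.ofReal (g x ^ 2) ∂μ ≤
      2 * (∫⁻ x in B, ∫⁻ y in B, ENNReal.ofReal ((g y - g x) ^ 2) ∂μ ∂μ) +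
        μ S * (ENNReal.ofReal (2 * c ^ 2) * μ B) := by
  have hpoint : ∀ x, ∀ y ∈ S, ENNReal.ofReal (g x ^ 2) ≤
      2 * ENNReal.ofReal ((g y - g x) ^ 2) + ENNReal.ofReal (2 * c ^ 2) := by
    intro x y hy
    rw [← ENNReal.ofReal_ofNat, ← ENNReal.ofReal_mul zero_le_two,
      ← ENNReal.ofReal_add (by positivity) (by positivity)]
    refine ENNReal.ofReal_le_ofReal ?_
    nlinarith [sq_nonneg (2 * g y - g x), sq_le_sq' (abs_le.1 (hg y hy)).1 (abs_le.1 (hg y hy)).2]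
  calc μ S * ∫⁻ x in B, ENNReal.ofReal (g x ^ 2) ∂μ
      = ∫⁻ x in B, ∫⁻ _ in S, ENNReal.ofReal (g x ^ 2) ∂μ ∂μ := by
        rw [← lintegral_const_mul' _ _ (measure_ne_top_of_subset hSB hBf)]
        simp_rw [setLIntegral_const, mul_comm]
    _ ≤ ∫⁻ x in B, (2 * ∫⁻ y in B, ENNReal.ofReal ((g y - g x) ^ 2) ∂μ) +
          ENNReal.ofReal (2 * c ^ 2) * μ S ∂μ := by
        refine lintegral_mono fun x => (setLIntegral_mono' hS (hpoint x)).trans ?_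
        rw [lintegral_add_right _ measurable_const, lintegral_const_mul' _ _ (by norm_num),
          setLIntegral_const]
        gcongr
    _ = _ := by
        rw [lintegral_add_right _ measurable_const, lintegral_const_mul' _ _ (by norm_num),
          setLIntegral_const]
        ring

lemma sub_sq_le_mul_setIntegral_norm_fderiv_sq {E : Type*} [NormedAddCommGroup E]
    [NormedSpace ℝ E] {g : E → ℝ} (hg : ContDiff ℝ 1 g) (x y : E) :
    (g y - g x) ^ 2 ≤ ‖y - x‖ ^ 2 *
      ∫ t in Ioc (0 : ℝ) 1, ‖fderiv ℝ g ((1 - t) • x + t • y)‖ ^ 2 := by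
  have hpath : Continuous fun t : ℝ => (1 - t) • x + t • y := by fun_prop
  have hcont : Continuous fun t : ℝ => fderiv ℝ g ((1 - t) • x + t • y) :=
    (hg.continuous_fderiv one_ne_zero).comp hpath
  set f : ℝ → ℝ := fun t => fderiv ℝ g ((1 - t) • x + t • y) (y - x)
  have hf : Continuous f := hcont.clm_apply continuous_const
  have hderiv : ∀ t, HasDerivAt (fun t : ℝ => g ((1 - t) • x + t • y)) (f t) t := fun t => by
    have hline : HasDerivAt (fun t : ℝ => (1 - t) • x + t • y) (y - x) t := by
      convert AffineMap.hasDerivAt_lineMap (a := x) (b := y) (x := t) using 2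
      exact (AffineMap.lineMap_apply_module x y _).symm
    exact (hasFDerivAt_of_contDiff hg _).comp_hasDerivAt t hline
  have hftc : ∫ t in Ioc (0 : ℝ) 1, f t = g y - g x := by
    rw [← intervalIntegral.integral_of_le zero_le_one,
      intervalIntegral.integral_eq_sub_of_hasDerivAt (fun t _ => hderiv t)
        (hf.intervalIntegrable _ _)]
    simp
  have hint : ∀ {h : ℝ → ℝ}, Continuous h → IntegrableOn h (Ioc 0 1) := fun hh =>
    hh.integrableOn_Icc.mono_set Ioc_subset_Icc_self
  have : IsProbabilityMeasure (volume.restrict (Ioc (0 : ℝ) 1)) := ⟨by simp⟩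
  calc (g y - g x) ^ 2 = (∫ t in Ioc (0 : ℝ) 1, f t) ^ 2 := by rw [hftc]
    _ ≤ ∫ t in Ioc (0 : ℝ) 1, f t ^ 2 :=
        even_two.convexOn_pow.map_integral_le (continuous_pow 2).continuousOn isClosed_univ
          (by simp) (hint hf) (hint (hf.pow 2))
    _ ≤ ∫ t in Ioc (0 : ℝ) 1, ‖y - x‖ ^ 2 * ‖fderiv ℝ g ((1 - t) • x + t • y)‖ ^ 2 := by
        refine setIntegral_mono (hint (hf.pow 2))
          (hint (continuous_const.mul (hcont.norm.pow 2))) fun t => ?_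
        rw [← mul_pow, ← sq_abs, mul_comm]
        gcongr
        exact (fderiv ℝ g _).le_opNorm (y - x)
    _ = _ := integral_const_mul _ _

variable {E : Type*} [NormedAddCommGroup E] [NormedSpace ℝ E] [FiniteDimensional ℝ E]
  [MeasurableSpace E] [BorelSpace E] {μ : Measure E} [μ.IsAddHaarMeasure] {B : Set E}

lemma setLIntegral_segment_le (hB : Convex ℝ B) (hBm : MeasurableSet B) {H : E → ℝ≥0∞}
    (hH : Measurable H) {t : ℝ} (ht : 1 / 2 ≤ t) (ht1 : t ≤ 1) {x : E} (hx : x ∈ B) :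
    ∫⁻ y in B, H ((1 - t) • x + t • y) ∂μ ≤ 2 ^ Module.finrank ℝ E * ∫⁻ z in B, H z ∂μ := by
  have ht0 : 0 < t := by linarith
  have hjac : ENNReal.ofReal |(t ^ Module.finrank ℝ E)⁻¹| ≤ 2 ^ Module.finrank ℝ E := by
    rw [abs_of_pos (by positivity), ← inv_pow, ENNReal.ofReal_pow (by positivity)]
    gcongr
    rw [← ENNReal.ofReal_ofNat]
    gcongr
    exact inv_le_of_inv_le₀ two_pos (by linarith)
  calc ∫⁻ y in B, H ((1 - t) • x + t • y) ∂μ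
      = ∫⁻ y in B, B.indicator H ((1 - t) • x + t • y) ∂μ :=
        setLIntegral_congr_fun hBm fun y hy =>
          (indicator_of_mem (hB hx hy (by linarith) ht0.le (by ring)) H).symm
    _ ≤ ∫⁻ y, B.indicator H ((1 - t) • x + t • y) ∂μ := setLIntegral_le_lintegral _ _
    _ = ∫⁻ z, B.indicator H ((1 - t) • x + z) ∂(μ.map fun y => t • y) := by
        have hmeas : Measurable fun z => B.indicator H ((1 - t) • x + z) :=
          (hH.indicator hBm).comp (measurable_const_add _)
        rw [lintegral_map hmeas (measurable_const_smul t)]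
    _ = ENNReal.ofReal |(t ^ Module.finrank ℝ E)⁻¹| * ∫⁻ z in B, H z ∂μ := by
        rw [Measure.map_addHaar_smul μ ht0.ne', lintegral_smul_measure, lintegral_add_left_eq_self,
          lintegral_indicator hBm, smul_eq_mul]
    _ ≤ _ := by gcongr

/-- Replacing `t` by `1 - t` exchanges the two points, so one may assume `1 / 2 ≤ t`. -/
lemma setLIntegral_setLIntegral_segment_le (hB : Convex ℝ B) (hBm : MeasurableSet B)
    {H : E → ℝ≥0∞} (hH : Continuous H) {t : ℝ} (ht0 : 0 ≤ t) (ht1 : t ≤ 1) :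
    ∫⁻ x in B, ∫⁻ y in B, H ((1 - t) • x + t • y) ∂μ ∂μ ≤
      2 ^ Module.finrank ℝ E * (∫⁻ z in B, H z ∂μ) * μ B := by
  wlog ht : 1 / 2 ≤ t generalizing t
  · rw [lintegral_lintegral_swap]
    · simpa only [sub_sub_cancel, add_comm] using
        this (t := 1 - t) (by linarith) (by linarith) (by linarith)
    · exact (hH.comp (by fun_prop : Continuous fun p : E × E =>
        (1 - t) • p.1 + t • p.2)).measurable.aemeasurable
  · rw [← setLIntegral_const]
    exact setLIntegral_mono' hBm fun x hx => setLIntegral_segment_le hB hBm hH.measurable ht ht1 hx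

lemma setLIntegral_setLIntegral_sub_sq_le (hB : Convex ℝ B) (hBm : MeasurableSet B) {d : ℝ}
    (hd : ∀ x ∈ B, ∀ y ∈ B, ‖y - x‖ ≤ d) {g : E → ℝ} (hg : ContDiff ℝ 1 g) :
    ∫⁻ x in B, ∫⁻ y in B, ENNReal.ofReal ((g y - g x) ^ 2) ∂μ ∂μ ≤
      ENNReal.ofReal (d ^ 2) * (2 ^ Module.finrank ℝ E *
        (∫⁻ z in B, ENNReal.ofReal (‖fderiv ℝ g z‖ ^ 2) ∂μ) * μ B) := by
  set H : E → ℝ≥0∞ := fun z => ENNReal.ofReal (‖fderiv ℝ g z‖ ^ 2)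
  have hH : Continuous H := ENNReal.continuous_ofReal.comp (continuous_norm_fderiv_sq hg)
  have hsegment : ∀ x ∈ B, ∀ y ∈ B, ENNReal.ofReal ((g y - g x) ^ 2) ≤
      ENNReal.ofReal (d ^ 2) * ∫⁻ t in Ioc (0 : ℝ) 1, H ((1 - t) • x + t • y) := by
    intro x hx y hy
    have hcont : Continuous fun t : ℝ => ‖fderiv ℝ g ((1 - t) • x + t • y)‖ ^ 2 :=
      (continuous_norm_fderiv_sq hg).comp (by fun_prop)
    rw [← ofReal_integral_eq_lintegral_ofReal
      (hcont.integrableOn_Icc.mono_set Ioc_subset_Icc_self) (.of_forall fun t => sq_nonneg _),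
      ← ENNReal.ofReal_mul (sq_nonneg d)]
    refine ENNReal.ofReal_le_ofReal ((sub_sq_le_mul_setIntegral_norm_fderiv_sq hg x y).trans ?_)
    gcongr
    exact hd x hx y hy
  calc ∫⁻ x in B, ∫⁻ y in B, ENNReal.ofReal ((g y - g x) ^ 2) ∂μ ∂μ
      ≤ ∫⁻ x in B, ∫⁻ y in B, ENNReal.ofReal (d ^ 2) *
          (∫⁻ t in Ioc (0 : ℝ) 1, H ((1 - t) • x + t • y)) ∂μ ∂μ :=
        setLIntegral_mono' hBm fun x hx => setLIntegral_mono' hBm fun y hy => hsegment x hx y hy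
    _ = ENNReal.ofReal (d ^ 2) *
          ∫⁻ x in B, ∫⁻ y in B, (∫⁻ t in Ioc (0 : ℝ) 1, H ((1 - t) • x + t • y)) ∂μ ∂μ := by
        simp_rw [lintegral_const_mul' _ _ ENNReal.ofReal_ne_top]
    _ = ENNReal.ofReal (d ^ 2) *
          ∫⁻ x in B, (∫⁻ t in Ioc (0 : ℝ) 1, ∫⁻ y in B, H ((1 - t) • x + t • y) ∂μ) ∂μ := by
        congr! 3 with x
        exact lintegral_lintegral_swap (hH.comp (by fun_prop : Continuous fun p : E × ℝ =>
          (1 - p.2) • x + p.2 • p.1)).measurable.aemeasurable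
    _ = ENNReal.ofReal (d ^ 2) *
          ∫⁻ t in Ioc (0 : ℝ) 1, ∫⁻ x in B, ∫⁻ y in B, H ((1 - t) • x + t • y) ∂μ ∂μ := by
        congr 1
        have hmeas : Measurable fun p : (E × ℝ) × E => H ((1 - p.1.2) • p.1.1 + p.1.2 • p.2) :=
          (hH.comp (by fun_prop)).measurable
        rw [lintegral_lintegral_swap]
        exact (hmeas.lintegral_prod_right' (ν := μ.restrict B)).aemeasurable
    _ ≤ ENNReal.ofReal (d ^ 2) * ∫⁻ _ in Ioc (0 : ℝ) 1,
          2 ^ Module.finrank ℝ E * (∫⁻ z in B, H z ∂μ) * μ B := by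
        gcongr _ * ?_
        exact setLIntegral_mono' measurableSet_Ioc fun t ht =>
          setLIntegral_setLIntegral_segment_le hB hBm hH ht.1.le ht.2
    _ = _ := by simp

lemma setLIntegral_sq_le_of_abs_le (hB : Convex ℝ B) (hBm : MeasurableSet B) (hB0 : μ B ≠ 0)
    (hBf : μ B ≠ ∞) {d : ℝ} (hd : ∀ x ∈ B, ∀ y ∈ B, ‖y - x‖ ≤ d) {S : Set E}
    (hS : MeasurableSet S) (hSB : S ⊆ B) (hμS : μ B ≤ 2 * μ S) {g : E → ℝ}
    (hg : ContDiff ℝ 1 g) {c : ℝ} (hgS : ∀ x ∈ S, |g x| ≤ c) :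
    ∫⁻ x in B, ENNReal.ofReal (g x ^ 2) ∂μ ≤
      4 * ENNReal.ofReal (d ^ 2) * 2 ^ Module.finrank ℝ E *
        (∫⁻ z in B, ENNReal.ofReal (‖fderiv ℝ g z‖ ^ 2) ∂μ) + ENNReal.ofReal (2 * c ^ 2) * μ B := by
  have hS0 : μ S ≠ 0 := fun h => hB0 (by simpa [h] using hμS)
  refine (ENNReal.mul_le_mul_iff_right hS0 (measure_ne_top_of_subset hSB hBf)).1 ?_
  set D := ∫⁻ z in B, ENNReal.ofReal (‖fderiv ℝ g z‖ ^ 2) ∂μ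
  calc _ ≤ _ := mul_setLIntegral_sq_le hBf hS hSB hgS
    _ ≤ 2 * (ENNReal.ofReal (d ^ 2) * (2 ^ Module.finrank ℝ E * D * (2 * μ S))) +
          μ S * (ENNReal.ofReal (2 * c ^ 2) * μ B) := by
        gcongr
        exact (setLIntegral_setLIntegral_sub_sq_le hB hBm hd hg).trans (by gcongr)
    _ = _ := by ring

end Poincare

section Liouville

variable {E : Type*} [NormedAddCommGroup E] [NormedSpace ℝ E] {Λ : ℝ} {v : E → ℝ} {a : E → E}

lemma IsEllipticFlux.of_fderiv_eq_smul (h : IsEllipticFlux Λ v a) {w : E → ℝ}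
    (hw : ContDiff ℝ 1 w) {T : E → E} (hT : Continuous T) {r : ℝ}
    (hD : ∀ x, fderiv ℝ w x = r • fderiv ℝ v (T x)) :
    IsEllipticFlux Λ w fun x => r • a (T x) where
  contDiff := hw
  continuous := (h.continuous.comp hT).const_smul r
  sq_norm_fderiv_le x :=
    calc ‖fderiv ℝ w x‖ ^ 2 = r ^ 2 * ‖fderiv ℝ v (T x)‖ ^ 2 := by
          rw [hD, norm_smul, mul_pow, Real.norm_eq_abs, sq_abs]
      _ ≤ r ^ 2 * fderiv ℝ v (T x) (a (T x)) := by gcongr; exact h.sq_norm_fderiv_le _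
      _ = fderiv ℝ w x (r • a (T x)) := by simp [hD]; ring
  norm_le x :=
    calc ‖r • a (T x)‖ ≤ ‖r‖ * (Λ * ‖fderiv ℝ v (T x)‖) := by
          rw [norm_smul]; gcongr; exact h.norm_le _
      _ = Λ * ‖fderiv ℝ w x‖ := by rw [hD, norm_smul]; ring

lemma IsEllipticSolution.const_mul_add [MeasurableSpace E] {μ : Measure E}
    (h : IsEllipticSolution μ Λ v a) (r d : ℝ) :
    IsEllipticSolution μ Λ (fun x => r * v x + d) (fun x => r • a x) where
  toIsEllipticFlux := h.of_fderiv_eq_smul ((contDiff_const.mul h.contDiff).add contDiff_const)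
    continuous_id fun x => (((hasFDerivAt_of_contDiff h.contDiff x).const_mul r).add_const d).fderiv
  isWeaklyDivFree φ hφ hφc := by
    simp only [map_smul, integral_smul, h.isWeaklyDivFree φ hφ hφc, smul_zero]

variable [FiniteDimensional ℝ E] [MeasurableSpace E] [BorelSpace E] {μ : Measure E}
  [μ.IsAddHaarMeasure]

lemma IsWeaklyDivFree.comp_smul (h : IsWeaklyDivFree μ a) {r : ℝ} (hr : r ≠ 0) :
    IsWeaklyDivFree μ fun x => a (r • x) := by
  intro φ hφ hφc
  have hscale : ∀ x, fderiv ℝ φ x (a (r • x)) =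
      r * fderiv ℝ (fun z => φ (r⁻¹ • z)) (r • x) (a (r • x)) := fun x => by
    simp [fderiv_comp_smul, inv_smul_smul₀ hr, mul_inv_cancel_left₀ hr]
  have hzero : ∫ x, fderiv ℝ (fun z => φ (r⁻¹ • z)) x (a x) ∂μ = 0 :=
    h _ (hφ.comp (contDiff_const_smul r⁻¹)) (hφc.comp_smul (inv_ne_zero hr))
  simp_rw [hscale]
  rw [integral_const_mul, Measure.integral_comp_smul μ
    (fun x => fderiv ℝ (fun z => φ (r⁻¹ • z)) x (a x)) r, hzero, smul_zero, mul_zero]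

namespace IsEllipticSolution

lemma comp_smul (h : IsEllipticSolution μ Λ v a) {r : ℝ} (hr : r ≠ 0) :
    IsEllipticSolution μ Λ (fun x => v (r • x)) (fun x => r • a (r • x)) where
  toIsEllipticFlux := h.of_fderiv_eq_smul (h.contDiff.comp (contDiff_const_smul r))
    (continuous_const_smul r) fun x => fderiv_comp_smul r
  isWeaklyDivFree φ hφ hφc := by
    simp only [map_smul, integral_smul, h.isWeaklyDivFree.comp_smul hr φ hφ hφc, smul_zero]

lemma setLIntegral_norm_fderiv_neg_log_sq_le (h : IsEllipticSolution μ Λ v a)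
    (hv : ∀ x, 0 < v x) {c : E} (η : ContDiffBump c) :
    ∫⁻ x in ball c η.rIn, ENNReal.ofReal (‖fderiv ℝ (fun x => -Real.log (v x)) x‖ ^ 2) ∂μ ≤
      ENNReal.ofReal (4 * ∫ x, Λ ^ 2 * ‖fderiv ℝ η x‖ ^ 2 ∂μ) := by
  have hint := integrable_sq_mul (μ := μ) η.continuous η.hasCompactSupport
    (continuous_norm_fderiv_sq (h.neg_log hv).contDiff)
  refine le_trans ?_ (ENNReal.ofReal_le_ofReal (h.log_energy_le hv η.contDiff η.hasCompactSupport))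
  rw [ofReal_integral_eq_lintegral_ofReal hint (.of_forall fun x => by positivity)]
  refine le_trans (setLIntegral_mono' measurableSet_ball fun x hx => ?_)
    (setLIntegral_le_lintegral (ball c η.rIn) _)
  simp [η.one_of_mem_closedBall (ball_subset_closedBall hx)]

end IsEllipticSolution

lemma exists_setIntegral_neg_log_sq_le (μ : Measure E) [μ.IsAddHaarMeasure] (Λ : ℝ) :
    ∃ m : ℝ, 0 < m ∧ ∀ (v : E → ℝ) (a : E → E), IsEllipticSolution μ Λ v a →
      (∀ x, v x ∈ Ioc 0 1) → μ (ball 0 1) ≤ 2 * μ (ball 0 1 ∩ {x | 1 / 2 ≤ v x}) →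
      ∫ x in ball 0 1, (-Real.log (v x)) ^ 2 ∂μ ≤ m := by
  let η : ContDiffBump (0 : E) := ⟨1, 2, one_pos, one_lt_two⟩
  set K : ℝ≥0∞ := 4 * ENNReal.ofReal (2 ^ 2) * 2 ^ Module.finrank ℝ E *
    ENNReal.ofReal (4 * ∫ x, Λ ^ 2 * ‖fderiv ℝ η x‖ ^ 2 ∂μ) +
      ENNReal.ofReal (2 * Real.log 2 ^ 2) * μ (ball 0 1)
  have hK : K ≠ ∞ := by finiteness
  refine ⟨K.toReal + 1, by positivity, fun v a h hv hμ => ?_⟩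
  have hv0 : ∀ x, 0 < v x := fun x => (hv x).1
  have hlog : ContDiff ℝ 1 fun x => -Real.log (v x) := (h.neg_log hv0).contDiff
  have hdist : ∀ x ∈ ball (0 : E) 1, ∀ y ∈ ball (0 : E) 1, ‖y - x‖ ≤ 2 := fun x hx y hy => by
    linarith [norm_sub_le y x, mem_ball_zero_iff.1 hx, mem_ball_zero_iff.1 hy]
  have hlog_le : ∀ x ∈ ball 0 1 ∩ {x | 1 / 2 ≤ v x}, |-Real.log (v x)| ≤ Real.log 2 := by
    rintro x ⟨-, hx⟩
    rw [abs_neg, abs_of_nonpos (Real.log_nonpos (hv0 x).le (hv x).2), neg_le, ← Real.log_inv]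
    exact Real.log_le_log (by norm_num) (by simpa using hx)
  have hpoincare : ∫⁻ x in ball 0 1, ENNReal.ofReal ((-Real.log (v x)) ^ 2) ∂μ ≤ K :=
    (setLIntegral_sq_le_of_abs_le (convex_ball 0 1) measurableSet_ball
      (measure_ball_pos μ 0 one_pos).ne' measure_ball_lt_top.ne hdist
      (measurableSet_ball.inter
        (measurableSet_le measurable_const h.contDiff.continuous.measurable))
      inter_subset_left hμ hlog hlog_le).trans
      (add_le_add_left (mul_le_mul_right (h.setLIntegral_norm_fderiv_neg_log_sq_le hv0 η) _) _)
  rw [integral_eq_lintegral_of_nonneg_ae (.of_forall fun x => sq_nonneg _)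
    (hlog.continuous.pow 2).aestronglyMeasurable]
  exact (ENNReal.toReal_mono hK hpoincare).trans (by linarith)

lemma exists_pos_forall_mem_ball_le (μ : Measure E) [μ.IsAddHaarMeasure]
    (hn : 2 ≤ Module.finrank ℝ E) (Λ : ℝ) :
    ∃ c : ℝ, 0 < c ∧ ∀ (v : E → ℝ) (a : E → E), IsEllipticSolution μ Λ v a →
      (∀ x, v x ∈ Ioc 0 1) → μ (ball 0 1) ≤ 2 * μ (ball 0 1 ∩ {x | 1 / 2 ≤ v x}) →
      ∀ x ∈ ball 0 (1 / 2), c ≤ v x := by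
  let η : ContDiffBump (0 : E) := ⟨1 / 2, 1, one_half_pos, one_half_lt_one⟩
  obtain ⟨m, hm, hlog⟩ := exists_setIntegral_neg_log_sq_le μ Λ
  obtain ⟨C, hC⟩ := exists_forall_le_of_isEllipticSubsolution μ hn Λ hm η
  refine ⟨Real.exp (-C), Real.exp_pos _, fun v a h hv hμ x hx => ?_⟩
  have hv0 : ∀ x, 0 < v x := fun x => (hv x).1
  have hxC : -Real.log (v x) ≤ C := hC _ _ (h.isEllipticSubsolution_neg_log hv0)
    (fun x => neg_nonneg.2 (Real.log_nonpos (hv0 x).le (hv x).2)) (hlog v a h hv hμ) x hx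
  rw [← Real.le_log_iff_exp_le (hv0 x)]
  linarith

lemma exists_pos_forall_mem_ball_le_comp_smul (μ : Measure E) [μ.IsAddHaarMeasure]
    (hn : 2 ≤ Module.finrank ℝ E) (Λ : ℝ) :
    ∃ c : ℝ, 0 < c ∧ ∀ (v : E → ℝ) (a : E → E), IsEllipticSolution μ Λ v a →
      (∀ x, v x ∈ Icc 0 1) → ∀ r : ℝ, 0 < r →
      μ (ball 0 1) ≤ 2 * μ (ball 0 1 ∩ {x | 1 / 2 ≤ v (r • x)}) →
      ∀ x ∈ ball 0 (r / 2), c ≤ v x := by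
  obtain ⟨c, hc, hgrowth⟩ := exists_pos_forall_mem_ball_le μ hn Λ
  refine ⟨c, hc, fun v a h hv r hr hμ x hx => le_of_forall_pos_le_add fun ε hε => ?_⟩
  obtain ⟨δ, hδ0, hδ⟩ := exists_between (lt_min hε one_pos)
  obtain ⟨hδε, hδ1⟩ := lt_min_iff.1 hδ
  have hrx : r⁻¹ • x ∈ ball (0 : E) (1 / 2) := by
    rw [mem_ball_zero_iff] at hx ⊢
    rw [norm_smul, norm_inv, Real.norm_of_nonneg hr.le, inv_mul_lt_iff₀ hr]
    linarith
  have hle : c ≤ (1 - δ) * v (r • r⁻¹ • x) + δ := by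
    refine hgrowth _ _ ((h.comp_smul hr.ne').const_mul_add (1 - δ) δ) (fun y => ?_) ?_ _ hrx
    · have := hv (r • y)
      constructor <;> nlinarith [this.1, this.2]
    · refine hμ.trans ?_
      gcongr 2 * μ (_ ∩ ?_)
      intro y (hy : 1 / 2 ≤ v (r • y))
      change 1 / 2 ≤ (1 - δ) * v (r • y) + δ
      nlinarith
  rw [smul_inv_smul₀ hr.ne'] at hle
  nlinarith [(hv x).1]

lemma measure_le_two_mul_measure_inter_or {X : Type*} [MeasurableSpace X] (μ : Measure X)
    {B S T : Set X} (hST : B ⊆ S ∪ T) : μ B ≤ 2 * μ (B ∩ S) ∨ μ B ≤ 2 * μ (B ∩ T) := by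
  by_contra! hlt
  have hcover : μ B ≤ μ (B ∩ S) + μ (B ∩ T) := by
    refine (measure_mono ?_).trans (measure_union_le _ _)
    rw [← inter_union_distrib_left]
    exact subset_inter Subset.rfl hST
  have := ENNReal.add_lt_add hlt.1 hlt.2
  rw [← mul_add, ← two_mul] at this
  exact this.not_ge (by gcongr)

/-- On each ball, either `v` or `1 - v` is at least `1 / 2` on half of the measure; one of the two
alternatives then holds on arbitrarily large balls. -/
lemma exists_pos_forall_le_or_forall_le_one_sub (μ : Measure E) [μ.IsAddHaarMeasure]
    (hn : 2 ≤ Module.finrank ℝ E) (Λ : ℝ) :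
    ∃ c : ℝ, 0 < c ∧ ∀ (v : E → ℝ) (a : E → E), IsEllipticSolution μ Λ v a →
      (∀ x, v x ∈ Icc 0 1) → (∀ x, c ≤ v x) ∨ ∀ x, v x ≤ 1 - c := by
  obtain ⟨c, hc, hgrowth⟩ := exists_pos_forall_mem_ball_le_comp_smul μ hn Λ
  refine ⟨c, hc, fun v a h hv => ?_⟩
  have hball : ∀ r : ℝ, 0 < r →
      (∀ x ∈ ball (0 : E) (r / 2), c ≤ v x) ∨ ∀ x ∈ ball (0 : E) (r / 2), v x ≤ 1 - c := by
    intro r hr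
    refine (measure_le_two_mul_measure_inter_or μ (B := ball 0 1)
      (S := {x | 1 / 2 ≤ v (r • x)}) (T := {x | 1 / 2 ≤ -1 * v (r • x) + 1})
      fun x _ => ?_).imp (hgrowth v a h hv r hr) fun hμ x hx => ?_
    · rcases le_total (1 / 2) (v (r • x)) with hx | hx
      · exact Or.inl hx
      · exact Or.inr (show 1 / 2 ≤ -1 * v (r • x) + 1 by linarith)
    · have := hgrowth _ _ (h.const_mul_add (-1) 1)
        (fun y => by constructor <;> linarith [(hv y).1, (hv y).2]) r hr hμ x hx
      linarith
  by_contra! hcontra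
  obtain ⟨⟨x, hx⟩, y, hy⟩ := hcontra
  rcases hball (2 * (‖x‖ + ‖y‖ + 1)) (by positivity) with hle | hle
  · exact hx.not_ge (hle x (mem_ball_zero_iff.2 (by linarith [norm_nonneg y])))
  · exact hy.not_ge (hle y (mem_ball_zero_iff.2 (by linarith [norm_nonneg x])))

namespace IsEllipticSolution

lemma eq_of_two_le_finrank (hn : 2 ≤ Module.finrank ℝ E) (h : IsEllipticSolution μ Λ v a)
    (hv : Bornology.IsBounded (range v)) (x y : E) : v x = v y := by
  obtain ⟨c, hc, halt⟩ := exists_pos_forall_le_or_forall_le_one_sub μ hn Λ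
  have hle : ∀ x, v x ≤ ⨆ x, v x := le_ciSup hv.bddAbove
  have hge : ∀ x, ⨅ x, v x ≤ v x := ciInf_le hv.bddBelow
  set s := ⨆ x, v x
  set i := ⨅ x, v x
  suffices hsi : s ≤ i from ((hle x).trans (hsi.trans (hge y))).antisymm
    ((hle y).trans (hsi.trans (hge x)))
  by_contra! his
  have hpos : 0 < s - i := sub_pos.2 his
  have hnormalize : ∀ x, (s - i)⁻¹ * v x + -((s - i)⁻¹ * i) = (v x - i) / (s - i) := fun x => by
    ring
  have hmem : ∀ x, (s - i)⁻¹ * v x + -((s - i)⁻¹ * i) ∈ Icc 0 1 := fun x => by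
    rw [hnormalize]
    exact ⟨div_nonneg (sub_nonneg.2 (hge x)) hpos.le,
      (div_le_one hpos).2 (sub_le_sub_right (hle x) i)⟩
  have hgap : 0 < c * (s - i) := mul_pos hc hpos
  have : Nonempty E := ⟨x⟩
  rcases halt _ _ (h.const_mul_add (s - i)⁻¹ (-((s - i)⁻¹ * i))) hmem with hlow | hhigh
  · have : i + c * (s - i) ≤ i := le_ciInf fun z => by
      have := hlow z
      rw [hnormalize, le_div_iff₀ hpos] at this
      linarith
    linarith
  · have : s ≤ s - c * (s - i) := ciSup_le fun z => by
      have := hhigh z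
      rw [hnormalize, div_le_iff₀ hpos] at this
      linarith
    linarith

lemma setIntegral_norm_fderiv_sq_le (h : IsEllipticSolution μ Λ v a) {M : ℝ}
    (hv : ∀ x, |v x| ≤ M) (η : ContDiffBump (0 : E)) (hη : η.rIn = 1) {r : ℝ} (hr : 0 < r) :
    ∫ x in ball 0 r, ‖fderiv ℝ v x‖ ^ 2 ∂μ ≤
      4 * (∫ x, (Λ * M) ^ 2 * ‖fderiv ℝ η x‖ ^ 2 ∂μ) * (r ^ Module.finrank ℝ E / r ^ 2) := by
  have hr' := h.comp_smul hr.ne'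
  have hηD := continuous_norm_fderiv_sq η.contDiff
  have hηDc := hasCompactSupport_norm_sq (η.hasCompactSupport.fderiv ℝ)
  have hunit : ∫ x in ball 0 1, ‖fderiv ℝ (fun x => v (r • x)) x‖ ^ 2 ∂μ ≤
      4 * ∫ x, (Λ * M) ^ 2 * ‖fderiv ℝ η x‖ ^ 2 ∂μ :=
    calc ∫ x in ball 0 1, ‖fderiv ℝ (fun x => v (r • x)) x‖ ^ 2 ∂μ
        = ∫ x in ball 0 1, η x ^ 2 * ‖fderiv ℝ (fun x => v (r • x)) x‖ ^ 2 ∂μ :=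
          setIntegral_congr_fun measurableSet_ball fun x hx => by
            simp [η.one_of_mem_closedBall (hη ▸ ball_subset_closedBall hx)]
      _ ≤ ∫ x, η x ^ 2 * ‖fderiv ℝ (fun x => v (r • x)) x‖ ^ 2 ∂μ :=
          setIntegral_le_integral (integrable_sq_mul η.continuous η.hasCompactSupport
            (continuous_norm_fderiv_sq hr'.contDiff)) (.of_forall fun x => by positivity)
      _ ≤ 4 * ∫ x, (Λ * |v (r • x)|) ^ 2 * ‖fderiv ℝ η x‖ ^ 2 ∂μ :=
          hr'.energy_le η.contDiff η.hasCompactSupport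
      _ ≤ 4 * ∫ x, (Λ * M) ^ 2 * ‖fderiv ℝ η x‖ ^ 2 ∂μ := by
          gcongr 4 * ?_
          refine integral_mono_of_nonneg (.of_forall fun x => by positivity)
            ((continuous_const.mul hηD).integrable_of_hasCompactSupport hηDc.mul_left)
            (.of_forall fun x => ?_)
          simp_rw [mul_pow]
          gcongr
          exact hv _
  have hscale : ∫ x in ball 0 1, ‖fderiv ℝ (fun x => v (r • x)) x‖ ^ 2 ∂μ =
      r ^ 2 / r ^ Module.finrank ℝ E * ∫ x in ball 0 r, ‖fderiv ℝ v x‖ ^ 2 ∂μ := by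
    simp_rw [fderiv_comp_smul, norm_smul, mul_pow, Real.norm_eq_abs, sq_abs]
    rw [integral_const_mul, Measure.setIntegral_comp_smul_of_pos μ
      (fun x => ‖fderiv ℝ v x‖ ^ 2) _ hr, smul_unitBall_of_pos hr, smul_eq_mul]
    ring
  rw [hscale, div_mul_eq_mul_div, div_le_iff₀ (by positivity)] at hunit
  rwa [← mul_div_assoc, le_div_iff₀ (by positivity), mul_comm]

lemma fderiv_eq_zero_of_finrank_le_one (hn : Module.finrank ℝ E ≤ 1)
    (h : IsEllipticSolution μ Λ v a) (hv : Bornology.IsBounded (range v)) (x : E) :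
    fderiv ℝ v x = 0 := by
  obtain ⟨M, hM⟩ := hv.exists_norm_le
  let η : ContDiffBump (0 : E) := ⟨1, 2, one_pos, one_lt_two⟩
  set K := 4 * ∫ x, (Λ * M) ^ 2 * ‖fderiv ℝ η x‖ ^ 2 ∂μ
  have hint : ∀ r, IntegrableOn (fun x => ‖fderiv ℝ v x‖ ^ 2) (ball 0 r) μ := fun r =>
    ((continuous_norm_fderiv_sq h.contDiff).continuousOn.integrableOn_compact
      (isCompact_closedBall 0 r)).mono_set ball_subset_closedBall
  have hdecay : ∀ r, 1 ≤ r → ∫ y in ball 0 r, ‖fderiv ℝ v y‖ ^ 2 ∂μ ≤ K * r⁻¹ := fun r hr => by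
    have hr0 : 0 < r := by linarith
    refine (h.setIntegral_norm_fderiv_sq_le (fun x => hM _ (mem_range_self x)) η rfl hr0).trans ?_
    gcongr
    calc r ^ Module.finrank ℝ E / r ^ 2 ≤ r ^ 1 / r ^ 2 := by gcongr
      _ = r⁻¹ := by field_simp
  set R := ‖x‖ + 1
  have hle : ∫ y in ball 0 R, ‖fderiv ℝ v y‖ ^ 2 ∂μ ≤ 0 := by
    have hlim : Tendsto (fun r : ℝ => K * r⁻¹) atTop (𝓝 0) := by
      simpa using tendsto_inv_atTop_zero.const_mul K
    refine ge_of_tendsto hlim ?_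
    filter_upwards [eventually_ge_atTop 1, eventually_ge_atTop R] with r hr hRr
    exact (setIntegral_mono_set (hint r) (.of_forall fun y => sq_nonneg _)
      (ball_subset_ball hRr).eventuallyLE).trans (hdecay r hr)
  have hzero := (setIntegral_eq_zero_iff_of_nonneg_ae (.of_forall fun y => sq_nonneg _)
    (hint R)).1 (hle.antisymm (integral_nonneg fun y => sq_nonneg _))
  have := Measure.eqOn_open_of_ae_eq hzero isOpen_ball
    (continuous_norm_fderiv_sq h.contDiff).continuousOn continuousOn_const
    (mem_ball_zero_iff.2 (lt_add_one ‖x‖))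
  simpa using this

/-- Liouville's theorem of De Giorgi, Nash and Moser. -/
theorem eq_of_isBounded_range (h : IsEllipticSolution μ Λ v a)
    (hv : Bornology.IsBounded (range v)) (x y : E) : v x = v y := by
  rcases le_or_gt (Module.finrank ℝ E) 1 with hn | hn
  · exact is_const_of_fderiv_eq_zero (h.contDiff.differentiable one_ne_zero)
      (h.fderiv_eq_zero_of_finrank_le_one hn hv) x y
  · exact h.eq_of_two_le_finrank hn hv x y

end IsEllipticSolution

end Liouville

section DifferenceQuotient

variable {E : Type*} [NormedAddCommGroup E]

lemma fderiv_eq_innerSL_gradient [InnerProductSpace ℝ E] [CompleteSpace E] (u : E → ℝ) (x : E) :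
    fderiv ℝ u x = innerSL ℝ (gradient u x) := by
  ext w
  exact inner_gradient_left.symm

lemma contDiff_gradient [InnerProductSpace ℝ E] [CompleteSpace E] {u : E → ℝ} {m n : WithTop ℕ∞}
    (hu : ContDiff ℝ n u) (hmn : m + 1 ≤ n) : ContDiff ℝ m (gradient u) :=
  (InnerProductSpace.toDual ℝ E).symm.toContinuousLinearEquiv.contDiff.comp (hu.fderiv_right hmn)

section NormedSpace

variable [NormedSpace ℝ E] {F : Type*} [NormedAddCommGroup F] [NormedSpace ℝ F] {f : E → F}

lemma norm_add_right_sub_le (hf : Differentiable ℝ f) {M : ℝ} (hM : ∀ x, ‖fderiv ℝ f x‖ ≤ M)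
    (h x : E) : ‖f (x + h) - f x‖ ≤ M * ‖h‖ := by
  simpa using convex_univ.norm_image_sub_le_of_norm_fderiv_le (fun y _ => hf y) (fun y _ => hM y)
    (mem_univ x) (mem_univ (x + h))

lemma fderiv_add_right_sub (hf : Differentiable ℝ f) (h x : E) :
    fderiv ℝ (fun x => f (x + h) - f x) x = fderiv ℝ f (x + h) - fderiv ℝ f x := by
  have hshift : Differentiable ℝ fun x => f (x + h) := hf.comp (by fun_prop)
  rw [fderiv_fun_sub (hshift x) (hf x), fderiv_comp_add_right]

lemma fderiv_eq_fderiv_zero_of_sub_eq (hf : ∀ h x, f (x + h) - f x = f (0 + h) - f 0) (x : E) :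
    fderiv ℝ f x = fderiv ℝ f 0 := by
  have hshift : (fun y => f (y + x)) = fun y => (f (0 + x) - f 0) + f y :=
    funext fun y => sub_eq_iff_eq_add.1 (hf x y)
  simpa [fderiv_comp_add_right] using congrArg (fun g => fderiv ℝ g 0) hshift

end NormedSpace

lemma eq_inner_add_of_fderiv_eq [InnerProductSpace ℝ E] [CompleteSpace E] {u : E → ℝ}
    (hu : Differentiable ℝ u) (hconst : ∀ x, fderiv ℝ u x = fderiv ℝ u 0) (x : E) :
    u x = ⟪gradient u 0, x⟫ + u 0 := by
  have hderiv : ∀ x, HasFDerivAt (fun x => u x - fderiv ℝ u 0 x) (0 : E →L[ℝ] ℝ) x := fun x => by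
    have := (hu x).hasFDerivAt.sub ((fderiv ℝ u 0).hasFDerivAt (x := x))
    rwa [hconst x, sub_self] at this
  have := is_const_of_fderiv_eq_zero (𝕜 := ℝ) (fun x => (hderiv x).differentiableAt)
    (fun x => (hderiv x).fderiv) x 0
  rw [map_zero, ← inner_gradient_left] at this
  linarith

section Measure

variable [MeasurableSpace E] [BorelSpace E] {μ : Measure E}

lemma IsWeaklyDivFree.comp_add_right [NormedSpace ℝ E] [μ.IsAddRightInvariant] {a : E → E}
    (ha : IsWeaklyDivFree μ a) (h : E) : IsWeaklyDivFree μ fun x => a (x + h) := by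
  intro φ hφ hφc
  have hzero := ha (fun x => φ (x + -h)) (hφ.comp (contDiff_id.add contDiff_const))
    (hφc.comp_homeomorph (Homeomorph.addRight (-h)))
  simp_rw [fderiv_comp_add_right] at hzero
  rw [← integral_add_right_eq_self _ h] at hzero
  simpa using hzero

lemma IsWeaklyDivFree.sub [NormedSpace ℝ E] [IsFiniteMeasureOnCompacts μ] {a b : E → E}
    (ha : IsWeaklyDivFree μ a) (hb : IsWeaklyDivFree μ b) (hac : Continuous a)
    (hbc : Continuous b) : IsWeaklyDivFree μ fun x => a x - b x := by
  intro φ hφ hφc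
  simp_rw [map_sub]
  rw [integral_sub (integrable_fderiv_apply hφ hφc hac) (integrable_fderiv_apply hφ hφc hbc),
    ha φ hφ hφc, hb φ hφ hφc, sub_zero]

variable [InnerProductSpace ℝ E]

/-- The Lipschitz and monotonicity bounds on `Φ` make the difference of two translates of a solution
of `div (Φ (∇u)) = 0` solve a linear uniformly elliptic equation. -/
lemma isEllipticSolution_add_right_sub [CompleteSpace E] [IsFiniteMeasureOnCompacts μ]
    [μ.IsAddRightInvariant] {u : E → ℝ} {Φ : E → E} {S : Set E} {K : ℝ≥0} (hu : ContDiff ℝ 1 u)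
    (huS : ∀ x, gradient u x ∈ S) (hΦ : LipschitzOnWith K Φ S)
    (hmono : ∀ p ∈ S, ∀ q ∈ S, ‖p - q‖ ^ 2 ≤ ⟪p - q, Φ p - Φ q⟫)
    (hdiv : IsWeaklyDivFree μ fun x => Φ (gradient u x)) (h : E) :
    IsEllipticSolution μ K (fun x => u (x + h) - u x)
      fun x => Φ (gradient u (x + h)) - Φ (gradient u x) := by
  have hcont : Continuous fun x => Φ (gradient u x) :=
    hΦ.continuousOn.comp_continuous (contDiff_gradient (m := 0) hu (by simp)).continuous huS
  have hcont' : Continuous fun x => Φ (gradient u (x + h)) := hcont.comp (by fun_prop)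
  have hderiv : ∀ x, fderiv ℝ (fun x => u (x + h) - u x) x =
      innerSL ℝ (gradient u (x + h) - gradient u x) := fun x => by
    rw [fderiv_add_right_sub (hu.differentiable one_ne_zero), map_sub,
      fderiv_eq_innerSL_gradient, fderiv_eq_innerSL_gradient]
  refine ⟨⟨(hu.comp (contDiff_id.add contDiff_const)).sub hu, hcont'.sub hcont, fun x => ?_,
    fun x => ?_⟩, (hdiv.comp_add_right h).sub hdiv hcont' hcont⟩
  · rw [hderiv, innerSL_apply_norm, innerSL_apply_apply]
    exact hmono _ (huS _) _ (huS _)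
  · rw [hderiv, innerSL_apply_norm]
    exact hΦ.norm_sub_le (huS _) (huS _)

lemma eq_inner_gradient_zero_add_of_isWeaklyDivFree [FiniteDimensional ℝ E] [μ.IsAddHaarMeasure]
    {u : E → ℝ} {Φ : E → E} {S : Set E} {K : ℝ≥0} (hu : ContDiff ℝ 1 u)
    (hS : Bornology.IsBounded S) (huS : ∀ x, gradient u x ∈ S) (hΦ : LipschitzOnWith K Φ S)
    (hmono : ∀ p ∈ S, ∀ q ∈ S, ‖p - q‖ ^ 2 ≤ ⟪p - q, Φ p - Φ q⟫)
    (hdiv : IsWeaklyDivFree μ fun x => Φ (gradient u x)) (x : E) :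
    u x = ⟪gradient u 0, x⟫ + u 0 := by
  have hdiff := hu.differentiable one_ne_zero
  obtain ⟨M, hM⟩ := hS.exists_norm_le
  have hbound : ∀ x, ‖fderiv ℝ u x‖ ≤ M := fun x => by
    rw [fderiv_eq_innerSL_gradient, innerSL_apply_norm]
    exact hM _ (huS x)
  refine eq_inner_add_of_fderiv_eq hdiff (fderiv_eq_fderiv_zero_of_sub_eq fun h y => ?_) x
  refine (isEllipticSolution_add_right_sub hu huS hΦ hmono hdiv h).eq_of_isBounded_range ?_ y 0
  refine isBounded_iff_forall_norm_le.2 ⟨M * ‖h‖, ?_⟩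
  rintro _ ⟨z, rfl⟩
  exact norm_add_right_sub_le hdiff hbound h z

end Measure

end DifferenceQuotient

section MaximalFlux

variable {E : Type*} [NormedAddCommGroup E] [InnerProductSpace ℝ E] {p q : E}

/-- The flux `p ↦ p / √(1 - |p|²)` of the maximal surface equation `div (Du / √(1 - |Du|²)) = 0`.
It is meaningful for `‖p‖ < 1` and takes the junk value `0` elsewhere. -/
noncomputable def maximalFlux (p : E) : E :=
  (√(1 - ‖p‖ ^ 2))⁻¹ • p

lemma one_sub_sq_pos {s : ℝ} (hs : 0 ≤ s) (hs1 : s < 1) : 0 < 1 - s ^ 2 :=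
  sub_pos.2 (pow_lt_one₀ hs hs1 two_ne_zero)

lemma inv_sqrt_one_sub_sq_le {s t : ℝ} (hs : 0 ≤ s) (hst : s ≤ t) (ht : t < 1) :
    (√(1 - s ^ 2))⁻¹ ≤ (√(1 - t ^ 2))⁻¹ :=
  inv_anti₀ (Real.sqrt_pos.2 (one_sub_sq_pos (hs.trans hst) ht)) (by gcongr)

lemma one_le_inv_sqrt_one_sub_sq {s : ℝ} (hs : 0 ≤ s) (hs1 : s < 1) : 1 ≤ (√(1 - s ^ 2))⁻¹ := by
  simpa using inv_sqrt_one_sub_sq_le le_rfl hs hs1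

lemma norm_sub_sq_le_inner_smul_sub_smul {α β : ℝ} (hα : 1 ≤ α) (hβ : 1 ≤ β)
    (hαβ : 0 ≤ (α - β) * (‖p‖ ^ 2 - ‖q‖ ^ 2)) :
    ‖p - q‖ ^ 2 ≤ ⟪p - q, α • p - β • q⟫ := by
  have hexpand : ⟪p - q, α • p - β • q⟫ =
      (α + β) / 2 * ‖p - q‖ ^ 2 + 1 / 2 * ((α - β) * (‖p‖ ^ 2 - ‖q‖ ^ 2)) := by
    simp only [norm_sub_sq_real, inner_sub_left, inner_sub_right, real_inner_smul_right,
      real_inner_self_eq_norm_sq, real_inner_comm p q]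
    ring
  nlinarith [sq_nonneg ‖p - q‖]

lemma norm_sub_sq_le_inner_maximalFlux_sub (hp : ‖p‖ < 1) (hq : ‖q‖ < 1) :
    ‖p - q‖ ^ 2 ≤ ⟪p - q, maximalFlux p - maximalFlux q⟫ := by
  refine norm_sub_sq_le_inner_smul_sub_smul (one_le_inv_sqrt_one_sub_sq (norm_nonneg _) hp)
    (one_le_inv_sqrt_one_sub_sq (norm_nonneg _) hq) ?_
  rcases le_total ‖p‖ ‖q‖ with hpq | hqp
  · exact mul_nonneg_of_nonpos_of_nonpos
      (sub_nonpos.2 (inv_sqrt_one_sub_sq_le (norm_nonneg p) hpq hq)) (sub_nonpos.2 (by gcongr))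
  · exact mul_nonneg (sub_nonneg.2 (inv_sqrt_one_sub_sq_le (norm_nonneg q) hqp hp))
      (sub_nonneg.2 (by gcongr))

lemma contDiffAt_maximalFlux (hp : ‖p‖ < 1) {n : WithTop ℕ∞} :
    ContDiffAt ℝ n (maximalFlux : E → E) p := by
  have hpos := one_sub_sq_pos (norm_nonneg p) hp
  have hsqrt : ContDiffAt ℝ n (fun p : E => √(1 - ‖p‖ ^ 2)) p :=
    (contDiffAt_const.sub (contDiff_norm_sq ℝ).contDiffAt).sqrt hpos.ne'
  exact (hsqrt.inv (Real.sqrt_pos.2 hpos).ne').smul contDiffAt_id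

lemma exists_lipschitzOnWith_maximalFlux [FiniteDimensional ℝ E] {M : ℝ} (hM : M < 1) :
    ∃ K, LipschitzOnWith K (maximalFlux : E → E) (closedBall 0 M) :=
  ContDiffOn.exists_lipschitzOnWith (n := 1)
    (fun _ hp => (contDiffAt_maximalFlux
      ((mem_closedBall_zero_iff.1 hp).trans_lt hM)).contDiffWithinAt)
    one_ne_zero (convex_closedBall 0 M) (isCompact_closedBall 0 M)

lemma hasFDerivAt_maximalFlux (hp : ‖p‖ < 1) :
    HasFDerivAt maximalFlux ((√(1 - ‖p‖ ^ 2))⁻¹ • ContinuousLinearMap.id ℝ E +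
      (√(1 - ‖p‖ ^ 2))⁻¹ ^ 3 • InnerProductSpace.rankOne ℝ p p) p := by
  have hpos := one_sub_sq_pos (norm_nonneg p) hp
  have hsqrt := ((hasFDerivAt_id p).norm_sq.const_sub 1).sqrt hpos.ne'
  have hflux := ((hasDerivAt_inv (Real.sqrt_pos.2 hpos).ne').comp_hasFDerivAt p hsqrt).smul
    (hasFDerivAt_id p)
  refine hflux.congr_fderiv ?_
  ext w
  have hscalar : ((√(1 - ‖p‖ ^ 2) ^ 2)⁻¹ * ((√(1 - ‖p‖ ^ 2))⁻¹ * 2⁻¹ * (2 * ⟪p, w⟫))) • p =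
      (√(1 - ‖p‖ ^ 2) ^ 3)⁻¹ • ⟪p, w⟫ • p := by
    rw [smul_smul]
    ring_nf
  simp [hscalar]

variable [FiniteDimensional ℝ E]

lemma trace_rankOne_self_comp (p : E) (A : E →L[ℝ] E) :
    LinearMap.trace ℝ E (InnerProductSpace.rankOne ℝ p p ∘L A) = ⟪p, A p⟫ := by
  rw [ContinuousLinearMap.toLinearMap_comp, LinearMap.trace_comp_comm',
    ← ContinuousLinearMap.toLinearMap_comp, InnerProductSpace.comp_rankOne,
    InnerProductSpace.trace_rankOne]

lemma trace_fderiv_maximalFlux_comp {G : E → E} {x : E} (hG : DifferentiableAt ℝ G x)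
    (hGx : ‖G x‖ < 1) :
    LinearMap.trace ℝ E (fderiv ℝ (fun x => maximalFlux (G x)) x) =
      (√(1 - ‖G x‖ ^ 2))⁻¹ ^ 3 * ((1 - ‖G x‖ ^ 2) * LinearMap.trace ℝ E (fderiv ℝ G x) +
        ⟪G x, fderiv ℝ G x (G x)⟫) := by
  have hpos := one_sub_sq_pos (norm_nonneg _) hGx
  have hpow : (√(1 - ‖G x‖ ^ 2))⁻¹ ^ 3 * (1 - ‖G x‖ ^ 2) = (√(1 - ‖G x‖ ^ 2))⁻¹ := by
    have hsqrt := (Real.sqrt_pos.2 hpos).ne'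
    nth_rewrite 2 [← Real.sq_sqrt hpos.le]
    field_simp
  rw [HasFDerivAt.fderiv (f := fun x => maximalFlux (G x))
    ((hasFDerivAt_maximalFlux hGx).comp x hG.hasFDerivAt), mul_add, ← mul_assoc, hpow,
    ← trace_rankOne_self_comp]
  simp

end MaximalFlux

section Divergence

variable {E : Type*} [NormedAddCommGroup E] [NormedSpace ℝ E] [FiniteDimensional ℝ E]
  {a : E → E}

lemma trace_fderiv_eq_sum_coord (ha : Differentiable ℝ a) {ι : Type*} [Fintype ι]
    (b : Module.Basis ι ℝ E) (x : E) :
    LinearMap.trace ℝ E (fderiv ℝ a x) = ∑ i, fderiv ℝ (fun x => b.coord i (a x)) x (b i) := by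
  classical
  rw [LinearMap.trace_eq_matrix_trace ℝ b, Matrix.trace]
  refine Finset.sum_congr rfl fun i _ => ?_
  have := (b.coord i).toContinuousLinearMap.hasFDerivAt.comp x (ha x).hasFDerivAt
  rw [HasFDerivAt.fderiv (f := fun x => b.coord i (a x)) this]
  simp [LinearMap.toMatrix_apply]

variable [MeasurableSpace E] [BorelSpace E] {μ : Measure E} [μ.IsAddHaarMeasure]

lemma integral_fderiv_apply_eq_neg_integral_mul_trace (ha : ContDiff ℝ 1 a) {φ : E → ℝ}
    (hφ : ContDiff ℝ 1 φ) (hφc : HasCompactSupport φ) :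
    ∫ x, fderiv ℝ φ x (a x) ∂μ = -∫ x, φ x * LinearMap.trace ℝ E (fderiv ℝ a x) ∂μ := by
  let b := Module.finBasis ℝ E
  let c i x := b.coord i (a x)
  have hc : ∀ i, ContDiff ℝ 1 (c i) := fun i => (b.coord i).toContinuousLinearMap.contDiff.comp ha
  have hexpand : ∀ x, fderiv ℝ φ x (a x) = ∑ i, fderiv ℝ φ x (b i) * c i x := fun x => by
    conv_lhs => rw [← b.sum_repr (a x), map_sum]
    simp [c, mul_comm]
  have hint : ∀ i, Integrable (fun x => fderiv ℝ φ x (b i) * c i x) μ := fun i =>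
    (((hφ.continuous_fderiv one_ne_zero).clm_apply continuous_const).mul
      (hc i).continuous).integrable_of_hasCompactSupport (hφc.fderiv_apply ℝ _).mul_right
  have hint' : ∀ i, Integrable (fun x => φ x * fderiv ℝ (c i) x (b i)) μ := fun i =>
    (hφ.continuous.mul (((hc i).continuous_fderiv one_ne_zero).clm_apply
      continuous_const)).integrable_of_hasCompactSupport hφc.mul_right
  have hparts : ∀ i, ∫ x, fderiv ℝ φ x (b i) * c i x ∂μ =
      -∫ x, φ x * fderiv ℝ (c i) x (b i) ∂μ := fun i => by
    rw [integral_mul_fderiv_eq_neg_fderiv_mul_of_integrable (hint i) (hint' i)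
      ((hφ.continuous.mul (hc i).continuous).integrable_of_hasCompactSupport hφc.mul_right)
      (fun x _ => hφ.differentiable one_ne_zero x)
      (fun x _ => (hc i).differentiable one_ne_zero x), neg_neg]
  simp_rw [hexpand, trace_fderiv_eq_sum_coord (ha.differentiable one_ne_zero) b, Finset.mul_sum]
  rw [integral_finsetSum _ fun i _ => hint i, integral_finsetSum _ fun i _ => hint' i,
    ← Finset.sum_neg_distrib]
  exact Finset.sum_congr rfl fun i _ => hparts i

lemma isWeaklyDivFree_of_trace_fderiv_eq_zero (ha : ContDiff ℝ 1 a)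
    (htrace : ∀ x, LinearMap.trace ℝ E (fderiv ℝ a x) = 0) : IsWeaklyDivFree μ a :=
  fun φ hφ hφc => by
    simp [integral_fderiv_apply_eq_neg_integral_mul_trace ha hφ hφc, htrace]

end Divergence

section MaximalSurfaceEquation

lemma isWeaklyDivFree_maximalFlux_gradient {E : Type*} [NormedAddCommGroup E]
    [InnerProductSpace ℝ E] [FiniteDimensional ℝ E] [MeasurableSpace E] [BorelSpace E]
    {μ : Measure E} [μ.IsAddHaarMeasure] {u : E → ℝ} (hu : ContDiff ℝ 2 u)
    (hgrad : ∀ x, ‖gradient u x‖ < 1)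
    (hmax : ∀ x, (1 - ‖gradient u x‖ ^ 2) * LinearMap.trace ℝ E (fderiv ℝ (gradient u) x) +
      ⟪gradient u x, fderiv ℝ (gradient u) x (gradient u x)⟫ = 0) :
    IsWeaklyDivFree μ fun x => maximalFlux (gradient u x) := by
  have hG : ContDiff ℝ 1 (gradient u) := contDiff_gradient hu one_add_one_eq_two.le
  refine isWeaklyDivFree_of_trace_fderiv_eq_zero (contDiff_iff_contDiffAt.2 fun x =>
    (contDiffAt_maximalFlux (hgrad x)).comp x hG.contDiffAt) fun x => ?_
  rw [trace_fderiv_maximalFlux_comp (hG.differentiable one_ne_zero x) (hgrad x), hmax, mul_zero]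

end MaximalSurfaceEquation

section Coordinates

variable {n : ℕ} (u : EuclideanSpace ℝ (Fin n) → ℝ) (x : EuclideanSpace ℝ (Fin n))

lemma gradient_apply (j : Fin n) : gradient u x j = pd u x j := by
  rw [pd, ← inner_gradient_left, EuclideanSpace.inner_single_right]
  simp

lemma norm_gradient_sq : ‖gradient u x‖ ^ 2 = ∑ j, pd u x j ^ 2 := by
  simp [EuclideanSpace.norm_sq_eq, gradient_apply]

variable {u x} (hu : DifferentiableAt ℝ (gradient u) x)
include hu

lemma fderiv_gradient_single_apply (j k : Fin n) :
    fderiv ℝ (gradient u) x (EuclideanSpace.single k 1) j = pd2 u x j k := by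
  have hcomp := ((EuclideanSpace.proj j).hasFDerivAt (𝕜 := ℝ)).comp x hu.hasFDerivAt
  have hcoord : (fun y => fderiv ℝ u y (EuclideanSpace.single j 1)) =
      EuclideanSpace.proj (𝕜 := ℝ) j ∘ gradient u :=
    funext fun y => (gradient_apply u y j).symm
  rw [pd2, hcoord, hcomp.fderiv]
  rfl

lemma trace_fderiv_gradient :
    LinearMap.trace ℝ (EuclideanSpace ℝ (Fin n)) (fderiv ℝ (gradient u) x) = ∑ j, pd2 u x j j := by
  simp [LinearMap.trace_eq_sum_inner _ (EuclideanSpace.basisFun (Fin n) ℝ),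
    EuclideanSpace.inner_single_left, fderiv_gradient_single_apply hu]

lemma inner_gradient_fderiv_gradient :
    ⟪gradient u x, fderiv ℝ (gradient u) x (gradient u x)⟫ =
      ∑ j, ∑ k, pd u x j * pd u x k * pd2 u x j k := by
  have hexpand : gradient u x = ∑ k, pd u x k • EuclideanSpace.single k 1 := by
    ext j
    simp [gradient_apply, Pi.single_apply]
  have hcoord : ∀ j, fderiv ℝ (gradient u) x (gradient u x) j =
      ∑ k, pd u x k * pd2 u x j k := fun j => by
    conv_lhs => rw [hexpand]
    simp [fderiv_gradient_single_apply hu]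
  simp_rw [PiLp.inner_apply, hcoord, gradient_apply]
  simp [Finset.mul_sum, mul_comm, mul_left_comm]

end Coordinates

theorem bernstein_maximal_surface_general {E : Type*} [NormedAddCommGroup E]
    [InnerProductSpace ℝ E] [FiniteDimensional ℝ E] [MeasurableSpace E] [BorelSpace E]
    {μ : Measure E} [μ.IsAddHaarMeasure] {u : E → ℝ} {M : ℝ} (hu : ContDiff ℝ 1 u) (hM : M < 1)
    (hgrad : ∀ x, ‖gradient u x‖ ≤ M)
    (hmax : IsWeaklyDivFree μ fun x => maximalFlux (gradient u x)) :
    ∃ (a : E) (c : ℝ), ‖a‖ < 1 ∧ ∀ x, u x = ⟪a, x⟫ + c := by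
  obtain ⟨K, hK⟩ := exists_lipschitzOnWith_maximalFlux (E := E) hM
  have hlt : ∀ p ∈ closedBall (0 : E) M, ‖p‖ < 1 := fun p hp =>
    (mem_closedBall_zero_iff.1 hp).trans_lt hM
  exact ⟨gradient u 0, u 0, (hgrad 0).trans_lt hM, eq_inner_gradient_zero_add_of_isWeaklyDivFree
    hu isBounded_closedBall (fun x => mem_closedBall_zero_iff.2 (hgrad x)) hK
    (fun p hp q hq => norm_sub_sq_le_inner_maximalFlux_sub (hlt p hp) (hlt q hq)) hmax⟩

/-- **Calabi (n ≤ 4), Cheng–Yau (all n)**: an entire `C²` solution of the maximal surface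
equation `div(Du/√(1−|Du|²)) = 0` (equivalently
`(1−|Du|²)·Δu + Σ_{j,k} u_{x_j} u_{x_k} u_{x_j x_k} = 0`) with `|Du| < 1` pointwise and
`sup |Du| < 1` is affine linear, with `|a| < 1` for the linear part `a`. -/
theorem bernstein_maximal_surface (n : ℕ)
    (u : EuclideanSpace ℝ (Fin n) → ℝ) (hu : ContDiff ℝ 2 u)
    (hgrad : ∀ x : EuclideanSpace ℝ (Fin n), ‖gradient u x‖ < 1)
    (hsup : ∃ M : ℝ, M < 1 ∧ ∀ x : EuclideanSpace ℝ (Fin n), ‖gradient u x‖ ≤ M)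
    (hmax : ∀ x : EuclideanSpace ℝ (Fin n),
      (1 - ∑ j, pd u x j ^ 2) * (∑ j, pd2 u x j j)
        + ∑ j, ∑ k, pd u x j * pd u x k * pd2 u x j k = 0) :
    ∃ (a : EuclideanSpace ℝ (Fin n)) (c : ℝ), ‖a‖ < 1 ∧
      ∀ x : EuclideanSpace ℝ (Fin n), u x = ⟪a, x⟫ + c := by
  obtain ⟨M, hM, hMu⟩ := hsup
  have hG := (contDiff_gradient hu one_add_one_eq_two.le).differentiable one_ne_zero
  refine bernstein_maximal_surface_general (μ := volume) (hu.of_le one_le_two) hM hMu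
    (isWeaklyDivFree_maximalFlux_gradient hu hgrad fun x => ?_)
  rw [norm_gradient_sq, trace_fderiv_gradient (hG x), inner_gradient_fderiv_gradient (hG x), hmax]
end

section
/- Every C² function u : ℝ² → ℝ satisfying the ∞-Laplace equation u_x²·u_xx + 2·u_x·u_y·u_xy + u_y²·u_yy = 0 at every point of ℝ² is affine linear, i.e. u(x,y) = a·x + b·y + c for some a, b, c ∈ ℝ. In other words, the equation L_{1,0}[u] = 0 has the Bernstein property. -/
/-- First partial derivative in the `x`-direction. -/
noncomputable def ux (u : ℝ × ℝ → ℝ) (p : ℝ × ℝ) : ℝ := fderiv ℝ u p (1, 0)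

/-- First partial derivative in the `y`-direction. -/
noncomputable def uy (u : ℝ × ℝ → ℝ) (p : ℝ × ℝ) : ℝ := fderiv ℝ u p (0, 1)

/-- Second partial derivative `u_xx`. -/
noncomputable def uxx (u : ℝ × ℝ → ℝ) (p : ℝ × ℝ) : ℝ := fderiv ℝ (ux u) p (1, 0)

/-- Second partial derivative `u_xy`. -/
noncomputable def uxy (u : ℝ × ℝ → ℝ) (p : ℝ × ℝ) : ℝ := fderiv ℝ (ux u) p (0, 1)

/-- Second partial derivative `u_yy`. -/
noncomputable def uyy (u : ℝ × ℝ → ℝ) (p : ℝ × ℝ) : ℝ := fderiv ℝ (uy u) p (0, 1)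

/-!
Unless the gradient of a `C²` solution `U` vanishes identically, it vanishes nowhere: if
`∇U(c) ≠ 0 = ∇U(x)`, then for a suitable small `b > 0` the function `‖z - c‖² (‖∇U(z)‖² + b)` has a
local minimum away from `c`, which the second variation in the direction of `∇U` excludes.

Hence `w = log ‖∇U‖` is a `C¹` function. The equation says that `∇w ⟂ ∇U`, so the streamlines of
`∇U` are level curves of `w`, and their curvature is `‖∇w‖`: the second derivative of `w` in the
direction `i∇w` exists and equals `-‖∇w‖⁴`. Such a `w` is constant. Otherwise Hofer's lemma and a
rescaling yield `‖∇w(0)‖ = 1` and `‖∇w‖ ≤ 2` on a large disc. Let `w(x) - w(y)` minus a penalty, of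
leading part `‖x - y‖ / 2`, be maximal at `(x, y)`. Then `x ≠ y`, and `∇w(x)` and `∇w(y)` almost
agree, so that the tangents to the two level curves, which both bend the same way, are almost
parallel. Moving `x` and `y` along these tangents, with `y` slightly faster than `x`, violates the
second-order condition for a maximum.

So `‖∇U‖` is a constant `p`. The streamlines are then straight lines along which `U` grows at the
rate `p²`, and two streamlines that are not parallel would separate too slowly, when followed in
opposite directions, for `U` to be `p`-Lipschitz.
-/

open Filter Topology
open scoped Gradient RealInnerProductSpace

section SecondDerivative

/-- `f` is differentiable near `x`, with derivative `f'` at `x`, and its derivative is in turn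
differentiable at `x`, with derivative `f''` there. This is less than being `C²`, and it is all
that is available for the first derivatives of a `C²` solution of a second-order equation. -/
def HasSecondDerivAt (f : ℝ → ℝ) (f' f'' x : ℝ) : Prop :=
  ∃ g : ℝ → ℝ, (∀ᶠ t in 𝓝 x, HasDerivAt f (g t) t) ∧ g x = f' ∧ HasDerivAt g f'' x

namespace HasSecondDerivAt

variable {f g : ℝ → ℝ} {f' f'' g' g'' x : ℝ}

lemma hasDerivAt (hf : HasSecondDerivAt f f' f'' x) : HasDerivAt f f' x := by
  obtain ⟨df, hdf, rfl, -⟩ := hf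
  exact hdf.self_of_nhds

lemma sub (hf : HasSecondDerivAt f f' f'' x) (hg : HasSecondDerivAt g g' g'' x) :
    HasSecondDerivAt (fun t => f t - g t) (f' - g') (f'' - g'') x := by
  obtain ⟨df, hdf, rfl, hddf⟩ := hf
  obtain ⟨dg, hdg, rfl, hddg⟩ := hg
  exact ⟨fun t => df t - dg t, by filter_upwards [hdf, hdg] with t using HasDerivAt.sub, rfl,
    hddf.sub hddg⟩

lemma mul (hf : HasSecondDerivAt f f' f'' x) (hg : HasSecondDerivAt g g' g'' x) :
    HasSecondDerivAt (fun t => f t * g t) (f' * g x + f x * g')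
      (f'' * g x + 2 * f' * g' + f x * g'') x := by
  have hfx := hf.hasDerivAt
  have hgx := hg.hasDerivAt
  obtain ⟨df, hdf, rfl, hddf⟩ := hf
  obtain ⟨dg, hdg, rfl, hddg⟩ := hg
  refine ⟨fun t => df t * g t + f t * dg t,
    by filter_upwards [hdf, hdg] with t using HasDerivAt.mul, rfl, ?_⟩
  exact ((hddf.mul hgx).add (hfx.mul hddg)).congr_deriv (by ring)

lemma add_const (hf : HasSecondDerivAt f f' f'' x) (c : ℝ) :
    HasSecondDerivAt (fun t => f t + c) f' f'' x := by
  obtain ⟨df, hdf, rfl, hddf⟩ := hf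
  exact ⟨df, hdf.mono fun t ht => ht.add_const c, rfl, hddf⟩

lemma div_const (hf : HasSecondDerivAt f f' f'' x) (c : ℝ) :
    HasSecondDerivAt (fun t => f t / c) (f' / c) (f'' / c) x := by
  obtain ⟨df, hdf, rfl, hddf⟩ := hf
  exact ⟨fun t => df t / c, hdf.mono fun t ht => ht.div_const c, rfl, hddf.div_const c⟩

lemma log (hf : HasSecondDerivAt f f' f'' x) (hx : f x ≠ 0) :
    HasSecondDerivAt (fun t => Real.log (f t)) (f' / f x) (f'' / f x - (f' / f x) ^ 2) x := by
  have hfx := hf.hasDerivAt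
  obtain ⟨df, hdf, rfl, hddf⟩ := hf
  refine ⟨fun t => df t / f t, ?_, rfl, (hddf.div hfx hx).congr_deriv (by field)⟩
  filter_upwards [hdf, hfx.continuousAt.eventually_ne hx] with t using HasDerivAt.log

lemma comp_const_mul (c : ℝ) (hf : HasSecondDerivAt f f' f'' 0) :
    HasSecondDerivAt (fun t => f (c * t)) (c * f') (c ^ 2 * f'') 0 := by
  have hc (t : ℝ) : HasDerivAt (fun t => c * t) c t := by
    simpa using (hasDerivAt_id t).const_mul c
  have hc0 : Tendsto (fun t => c * t) (𝓝 0) (𝓝 0) := by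
    simpa using (hc 0).continuousAt.tendsto
  obtain ⟨df, hdf, rfl, hddf⟩ := hf
  refine ⟨fun t => c * df (c * t), ?_, by simp, ?_⟩
  · filter_upwards [hc0.eventually hdf] with t ht
    exact (ht.comp t (hc t)).congr_deriv (mul_comm _ _)
  · rw [← mul_zero c] at hddf
    exact ((hddf.comp 0 (hc 0)).const_mul c).congr_deriv (by ring)

lemma nonneg_of_isLocalMin (hf : HasSecondDerivAt f f' f'' x) (hmin : IsLocalMin f x) :
    0 ≤ f'' := by
  have hfx := hf.hasDerivAt
  obtain ⟨df, hdf, -, hddf⟩ := hf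
  by_contra! hneg
  have hderiv : deriv f =ᶠ[𝓝 x] df := hdf.mono fun t ht => ht.deriv
  have hsecond : deriv (deriv f) x = f'' := hderiv.deriv_eq.trans hddf.deriv
  have hmax : IsLocalMax f x :=
    isLocalMax_of_deriv_deriv_neg (hsecond ▸ hneg) hmin.deriv_eq_zero hfx.continuousAt
  have hconst : f =ᶠ[𝓝 x] fun _ => f x := by
    filter_upwards [hmin, hmax] with t h₁ h₂ using le_antisymm h₂ h₁
  have hzero : deriv (deriv f) x = 0 := by
    rw [hconst.deriv.deriv_eq]
    simp
  exact hneg.ne (hsecond.symm.trans hzero)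

lemma nonpos_of_isLocalMax (hf : HasSecondDerivAt f f' f'' x) (hmax : IsLocalMax f x) :
    f'' ≤ 0 := by
  obtain ⟨df, hdf, hf', hddf⟩ := hf
  have hneg : HasSecondDerivAt (-f) (-f') (-f'') x :=
    ⟨-df, hdf.mono fun t ht => ht.neg, by simp [hf'], hddf.neg⟩
  exact neg_nonneg.1 (hneg.nonneg_of_isLocalMin hmax.neg)

end HasSecondDerivAt

lemma hasSecondDerivAt_quadratic (a b c : ℝ) :
    HasSecondDerivAt (fun t => a + b * t + c * t ^ 2) b (2 * c) 0 := by
  refine ⟨fun t => b + 2 * c * t, .of_forall fun t => ?_, by simp, ?_⟩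
  · have h := (((hasDerivAt_id t).const_mul b).const_add a).add ((hasDerivAt_pow 2 t).const_mul c)
    exact h.congr_deriv (by push_cast; ring)
  · simpa using ((hasDerivAt_id (0 : ℝ)).const_mul (2 * c)).const_add b

end SecondDerivative

section Gradient

variable {E : Type*} [NormedAddCommGroup E] [InnerProductSpace ℝ E]

lemma hasDerivAt_inner_of_eq_zero {a b : ℝ → E} {b' : E} {t : ℝ} (ha : ContinuousAt a t)
    (hb : HasDerivAt b b' t) (hbt : b t = 0) :
    HasDerivAt (fun s => ⟪a s, b s⟫) ⟪a t, b'⟫ t := by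
  rw [hasDerivAt_iff_tendsto_slope] at hb ⊢
  refine ((ha.tendsto.mono_left nhdsWithin_le_nhds).inner hb).congr fun s => ?_
  simp [slope, hbt, inner_smul_right]

lemma norm_add_smul_sq (a b : E) (t : ℝ) :
    ‖a + t • b‖ ^ 2 = ‖a‖ ^ 2 + 2 * ⟪a, b⟫ * t + ‖b‖ ^ 2 * t ^ 2 := by
  rw [norm_add_sq_real, inner_smul_right, norm_smul, mul_pow, Real.norm_eq_abs, sq_abs]
  ring

lemma hasDerivAt_add_smul (x v : E) (t : ℝ) : HasDerivAt (fun s : ℝ => x + s • v) v t := by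
  simpa using ((hasDerivAt_id t).smul_const v).const_add x

variable [CompleteSpace E] {f : E → ℝ}

lemma hasDerivAt_comp_line {g x v : E} {t : ℝ} (hf : HasGradientAt f g (x + t • v)) :
    HasDerivAt (fun s : ℝ => f (x + s • v)) ⟪g, v⟫ t := by
  have hline := hasDerivAt_add_smul x v t
  exact hf.hasFDerivAt.comp_hasDerivAt t hline

lemma hasGradientAt_comp_add_smul {g a x : E} {c : ℝ} (hf : HasGradientAt f g (a + c • x)) :
    HasGradientAt (fun z => f (a + c • z)) (c • g) x := by
  rw [hasGradientAt_iff_hasFDerivAt] at hf ⊢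
  refine (hf.comp x (((hasFDerivAt_id x).const_smul c).const_add a)).congr_fderiv ?_
  ext v
  simp

lemma contDiff_gradient_s18 {n : WithTop ℕ∞} (hf : ContDiff ℝ (n + 1) f) : ContDiff ℝ n (∇ f) :=
  (InnerProductSpace.toDual ℝ E).symm.contDiff.comp (hf.fderiv_right le_rfl)

lemma inner_fderiv_gradient {x : E} (hf : DifferentiableAt ℝ (fderiv ℝ f) x) (v w : E) :
    ⟪fderiv ℝ (∇ f) x v, w⟫ = fderiv ℝ (fderiv ℝ f) x v w := by
  have hgrad : HasFDerivAt (∇ f) _ x :=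
    (InnerProductSpace.toDual ℝ E).symm.toContinuousLinearEquiv.hasFDerivAt.comp x hf.hasFDerivAt
  rw [hgrad.fderiv]
  exact InnerProductSpace.toDual_symm_apply

lemma eq_add_inner_of_gradient_eq {g : E} (hf : Differentiable ℝ f) (hg : ∀ x, ∇ f x = g) (x : E) :
    f x = f 0 + ⟪g, x⟫ := by
  have hderiv (z : E) : HasFDerivAt (fun z => f z - ⟪g, z⟫) (0 : E →L[ℝ] ℝ) z := by
    have h := (hf z).hasGradientAt.hasFDerivAt.sub (innerSL ℝ g).hasFDerivAt
    refine h.congr_fderiv ?_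
    ext v
    simp [hg]
  have h := is_const_of_fderiv_eq_zero (𝕜 := ℝ) (fun z => (hderiv z).differentiableAt)
    (fun z => (hderiv z).fderiv) x 0
  simp only [inner_zero_right, sub_zero] at h
  linarith

lemma sub_le_mul_norm_of_norm_gradient_le {s : Set E} {C : ℝ} (hs : Convex ℝ s)
    (hf : Differentiable ℝ f) (hC : ∀ z ∈ s, ‖∇ f z‖ ≤ C) {x y : E} (hx : x ∈ s) (hy : y ∈ s) :
    f x - f y ≤ C * ‖x - y‖ := by
  refine (le_abs_self _).trans (hs.norm_image_sub_le_of_norm_hasFDerivWithin_le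
    (fun z _ => (hf z).hasGradientAt.hasFDerivAt.hasFDerivWithinAt) (fun z hz => ?_) hy hx)
  rw [LinearIsometryEquiv.norm_map]
  exact hC z hz

end Gradient

lemma exists_isLocalMin_of_lt_on_spheres {X : Type*} [PseudoMetricSpace X] [ProperSpace X]
    {ψ : X → ℝ} (hψ : Continuous ψ) {c x : X} {δ R : ℝ} (hδx : δ < dist x c) (hxR : dist x c < R)
    (hδ : ∀ z, dist z c = δ → ψ x < ψ z) (hR : ∀ z, dist z c = R → ψ x < ψ z) :
    ∃ z, δ < dist z c ∧ IsLocalMin ψ z := by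
  have hsphere : ∀ z ∈ (Metric.closedBall c R \ Metric.ball c δ) \
      (Metric.ball c R \ Metric.closedBall c δ), ψ x < ψ z := by
    rintro z ⟨⟨hzR, hzδ⟩, hz⟩
    simp only [Metric.mem_closedBall, Metric.mem_ball, Set.mem_sdiff, not_lt, not_and,
      not_not] at hzR hzδ hz
    rcases hzR.lt_or_eq with h | h
    · exact hδ z ((hz h).antisymm hzδ)
    · exact hR z h
  obtain ⟨z, ⟨-, hz⟩, hmin⟩ :=
    ((isCompact_closedBall c R).diff Metric.isOpen_ball).exists_isLocalMin_mem_open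
      (Set.sdiff_subset_sdiff Metric.ball_subset_closedBall Metric.ball_subset_closedBall)
      hψ.continuousOn (by simp [hδx.le, hxR.le]) hsphere
      (Metric.isOpen_ball.sdiff Metric.isClosed_closedBall)
  exact ⟨z, by simpa using hz, hmin⟩

section InftyHarmonic

variable {E : Type*} [NormedAddCommGroup E] [InnerProductSpace ℝ E] [CompleteSpace E] {U : E → ℝ}

/-- The vector `D²U(x) ∇U(x)`: the gradient of `‖∇U‖² / 2`, and the acceleration of the streamlines
`ẋ = ∇U(x)`. -/
noncomputable def hessianGradient (U : E → ℝ) (x : E) : E :=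
  fderiv ℝ (∇ U) x (∇ U x)

lemma hasGradientAt_norm_gradient_sq (hU : ContDiff ℝ 2 U) (x : E) :
    HasGradientAt (fun z => ‖∇ U z‖ ^ 2) ((2 : ℝ) • hessianGradient U x) x := by
  have hgrad : ContDiff ℝ 1 (∇ U) := contDiff_gradient_s18 hU
  have hfderiv : DifferentiableAt ℝ (fderiv ℝ U) x :=
    (hU.fderiv_right (m := 1) le_rfl).differentiable one_ne_zero x
  have hsymm := (hU.contDiffAt (x := x)).isSymmSndFDerivAt (by simp)
  rw [hasGradientAt_iff_hasFDerivAt]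
  refine (hgrad.differentiable one_ne_zero x).hasFDerivAt.norm_sq.congr_fderiv ?_
  ext v
  suffices ⟪∇ U x, fderiv ℝ (∇ U) x v⟫ = ⟪hessianGradient U x, v⟫ by
    simpa [inner_smul_left] using this
  rw [hessianGradient, real_inner_comm, inner_fderiv_gradient hfderiv,
    inner_fderiv_gradient hfderiv, hsymm.eq]

lemma hasGradientAt_log_norm_gradient (hU : ContDiff ℝ 2 U) {x : E} (hx : ∇ U x ≠ 0) :
    HasGradientAt (fun z => Real.log ‖∇ U z‖) ((‖∇ U x‖ ^ 2)⁻¹ • hessianGradient U x) x := by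
  have h := ((hasGradientAt_norm_gradient_sq hU x).hasFDerivAt.log (by positivity)).const_mul 2⁻¹
  simp only [Real.log_pow, Nat.cast_ofNat, inv_mul_cancel_left₀ (two_ne_zero (α := ℝ))] at h
  refine h.congr_fderiv ?_
  ext v
  simp only [map_smul, smul_apply, InnerProductSpace.toDual_apply_apply, smul_eq_mul]
  ring

/-- An entire classical solution of the `∞`-Laplace equation `D²U(∇U, ∇U) = 0`. -/
structure IsInftyHarmonic (U : E → ℝ) : Prop where
  contDiff : ContDiff ℝ 2 U
  inner_eq_zero (x : E) : ⟪hessianGradient U x, ∇ U x⟫ = 0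

namespace IsInftyHarmonic

lemma hasSecondDerivAt_norm_gradient_sq (hU : IsInftyHarmonic U) (x : E) :
    HasSecondDerivAt (fun t : ℝ => ‖∇ U (x + t • ∇ U x)‖ ^ 2) 0
      (-2 * ‖hessianGradient U x‖ ^ 2) 0 := by
  have hgrad : ContDiff ℝ 1 (∇ U) := contDiff_gradient_s18 hU.contDiff
  have hline := hasDerivAt_add_smul x (∇ U x) 0
  have hacc : Continuous (hessianGradient U) :=
    (hgrad.continuous_fderiv one_ne_zero).clm_apply hgrad.continuous
  -- `hessianGradient U` is merely continuous, but by the equation its product with `∇ U x` along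
  -- the line equals its product with a differentiable factor that vanishes at `t = 0`.
  have hderiv (t : ℝ) : HasDerivAt (fun t : ℝ => ‖∇ U (x + t • ∇ U x)‖ ^ 2)
      (2 * ⟪hessianGradient U (x + t • ∇ U x), ∇ U x - ∇ U (x + t • ∇ U x)⟫) t := by
    refine (hasDerivAt_comp_line (hasGradientAt_norm_gradient_sq hU.contDiff _)).congr_deriv ?_
    rw [inner_sub_right, hU.inner_eq_zero, sub_zero, inner_smul_left]
    rfl
  refine ⟨_, .of_forall hderiv, by simp, ?_⟩
  have hdiff : HasDerivAt (fun t : ℝ => ∇ U x - ∇ U (x + t • ∇ U x)) (-hessianGradient U x) 0 := by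
    have h := (hgrad.differentiable one_ne_zero (x + (0 : ℝ) • ∇ U x)).hasFDerivAt.comp_hasDerivAt
      (0 : ℝ) hline
    simpa [hessianGradient] using h.const_sub (∇ U x)
  have h := hasDerivAt_inner_of_eq_zero
    (hacc.continuousAt.comp (f := fun t : ℝ => x + t • ∇ U x) hline.continuousAt) hdiff (by simp)
  refine (h.const_mul 2).congr_deriv ?_
  simp

lemma not_isLocalMin_norm_sub_sq_mul (hU : IsInftyHarmonic U) {b : ℝ} (hb : 0 < b) {c z : E}
    (hz : z ≠ c) : ¬ IsLocalMin (fun x => ‖x - c‖ ^ 2 * (‖∇ U x‖ ^ 2 + b)) z := by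
  intro hmin
  set P := ‖∇ U z‖ ^ 2 + b
  set s := ‖z - c‖ ^ 2
  have hs : 0 < s := by
    have := sub_ne_zero.2 hz
    positivity
  have hcritical : s • hessianGradient U z = -(P • (z - c)) := by
    have h := hmin.hasFDerivAt_eq_zero (((hasFDerivAt_id z).sub_const c).norm_sq.mul
      ((hasGradientAt_norm_gradient_sq hU.contDiff z).hasFDerivAt.add_const b))
    refine ext_inner_right ℝ fun v => ?_
    have hv := DFunLike.congr_fun h v
    simp only [id_eq, map_smul, map_sub, ContinuousLinearMap.comp_id, add_apply, smul_apply,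
      InnerProductSpace.toDual_apply_apply, smul_eq_mul, sub_apply, coe_innerSL_apply,
      nsmul_eq_mul, Nat.cast_ofNat, zero_apply, real_inner_smul_left, inner_neg_left,
      inner_sub_left] at hv ⊢
    linarith
  have hnorm : s * ‖hessianGradient U z‖ ^ 2 = P ^ 2 := by
    have h := congrArg (fun v => ‖v‖ ^ 2) hcritical
    simp only [norm_neg, norm_smul, mul_pow, Real.norm_eq_abs, sq_abs] at h
    exact mul_left_cancel₀ hs.ne' (by linarith)
  have hsecond : 0 ≤ 2 * ‖∇ U z‖ ^ 2 * P - 2 * P ^ 2 := by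
    have hquad := hasSecondDerivAt_quadratic s (2 * ⟪z - c, ∇ U z⟫) (‖∇ U z‖ ^ 2)
    simp_rw [s, ← norm_add_smul_sq] at hquad
    have hprod := hquad.mul ((hU.hasSecondDerivAt_norm_gradient_sq z).add_const b)
    have h := hprod.nonneg_of_isLocalMin ?_
    · simp only [mul_zero, zero_smul, add_zero] at h
      nlinarith
    · have hcont : ContinuousAt (fun t : ℝ => z + t • ∇ U z) 0 := by fun_prop
      have := hcont.tendsto
      simp only [zero_smul, add_zero] at this
      filter_upwards [this.eventually hmin] with t ht
      simpa [add_sub_right_comm] using ht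
  nlinarith [sq_nonneg ‖∇ U z‖]

lemma gradient_ne_zero [ProperSpace E] (hU : IsInftyHarmonic U) {c : E} (hc : ∇ U c ≠ 0) (x : E) :
    ∇ U x ≠ 0 := by
  intro hx
  have hgrad : Continuous (∇ U) := (contDiff_gradient_s18 (n := 1) hU.contDiff).continuous
  have hxc : 0 < ‖x - c‖ := norm_sub_pos_iff.2 (by rintro rfl; exact hc hx)
  have hnorm : 0 < ‖∇ U c‖ ^ 2 := by positivity
  set m := ‖∇ U c‖ ^ 2 / 2
  have hm : 0 < m := half_pos hnorm
  obtain ⟨δ, hδ, hball⟩ : ∃ δ > 0, ∀ z ∈ Metric.closedBall c δ, m < ‖∇ U z‖ ^ 2 :=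
    Metric.nhds_basis_closedBall.eventually_iff.1 <|
      (hgrad.norm.pow 2).continuousAt.eventually (lt_mem_nhds (half_lt_self hnorm))
  have hδx : δ < ‖x - c‖ := by
    by_contra! h
    have := hball x (by simpa [dist_eq_norm] using h)
    rw [hx, norm_zero, zero_pow two_ne_zero] at this
    exact this.not_gt hm
  set b := δ ^ 2 * m / ‖x - c‖ ^ 2
  have hb : 0 < b := by positivity
  let ψ : E → ℝ := fun z => ‖z - c‖ ^ 2 * (‖∇ U z‖ ^ 2 + b)
  have hψx : ψ x = δ ^ 2 * m := by
    simp only [ψ, b, hx, norm_zero, zero_pow two_ne_zero, zero_add]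
    field
  obtain ⟨z, hz, hmin⟩ : ∃ z, δ < dist z c ∧ IsLocalMin ψ z := by
    refine exists_isLocalMin_of_lt_on_spheres (x := x) (R := ‖x - c‖ + 1) (by fun_prop)
      (by rwa [dist_eq_norm]) (by simp [dist_eq_norm]) (fun z hz => ?_) (fun z hz => ?_)
    · have hlarge : m < ‖∇ U z‖ ^ 2 := hball z hz.le
      have hzc : 0 < ‖z - c‖ := by rwa [← dist_eq_norm, hz]
      rw [hψx, ← hz, dist_eq_norm]
      dsimp only [ψ]
      gcongr
      linarith
    · rw [dist_eq_norm] at hz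
      calc ψ x = ‖x - c‖ ^ 2 * b := by simp [ψ, hx]
        _ < ‖z - c‖ ^ 2 * b := by gcongr; linarith
        _ ≤ ψ z := by dsimp only [ψ]; gcongr; linarith [sq_nonneg ‖∇ U z‖]
  exact hU.not_isLocalMin_norm_sub_sq_mul hb (dist_pos.1 (hδ.trans hz)) hmin

end IsInftyHarmonic

end InftyHarmonic

section Eikonal

variable {E : Type*} [NormedAddCommGroup E] [InnerProductSpace ℝ E] [CompleteSpace E] {U : E → ℝ}

lemma gradient_add_smul_gradient_of_hessianGradient_eq_zero (hU : ContDiff ℝ 2 U)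
    (hacc : ∀ x, hessianGradient U x = 0) (x : E) (s : ℝ) : ∇ U (x + s • ∇ U x) = ∇ U x := by
  have hgrad : ContDiff ℝ 1 (∇ U) := contDiff_gradient_s18 hU
  set v := s • ∇ U x
  have hderiv (t : ℝ) : HasDerivAt (fun t : ℝ => ∇ U (x + t • v) - ∇ U x)
      (fderiv ℝ (∇ U) (x + t • v) v) t :=
    ((hgrad.differentiable one_ne_zero _).hasFDerivAt.comp_hasDerivAt t
      (hasDerivAt_add_smul x v t)).sub_const _
  have hopNorm : Continuous fun t : ℝ => ‖fderiv ℝ (∇ U) (x + t • v)‖ :=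
    ((hgrad.continuous_fderiv one_ne_zero).comp (by fun_prop)).norm
  obtain ⟨K, hK⟩ := (isCompact_Icc (a := (0 : ℝ)) (b := 1)).bddAbove_image hopNorm.continuousOn
  -- Since `D²U(y) ∇U(y) = 0`, the derivative is linear in the deviation from `∇ U x`: Grönwall.
  have hdeviation (t : ℝ) : fderiv ℝ (∇ U) (x + t • v) v
      = (-s) • fderiv ℝ (∇ U) (x + t • v) (∇ U (x + t • v) - ∇ U x) := by
    have := hacc (x + t • v)
    rw [hessianGradient] at this
    simp [v, this]
  have hbound : ∀ t ∈ Set.Ico (0 : ℝ) 1, ‖fderiv ℝ (∇ U) (x + t • v) v‖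
      ≤ |s| * K * ‖∇ U (x + t • v) - ∇ U x‖ := fun t ht => by
    rw [hdeviation, norm_smul, norm_neg, Real.norm_eq_abs, mul_assoc]
    gcongr
    exact ContinuousLinearMap.le_of_opNorm_le _ (hK ⟨t, ⟨ht.1, ht.2.le⟩, rfl⟩) _
  have h := eq_zero_of_abs_deriv_le_mul_abs_self_of_eq_zero_right
    (fun t _ => (hderiv t).continuousAt.continuousWithinAt)
    (fun t _ => (hderiv t).hasDerivWithinAt) (by simp) hbound 1 (by simp)
  rwa [sub_eq_zero, one_smul] at h

lemma apply_add_smul_gradient_of_norm_gradient_eq (hU : ContDiff ℝ 2 U) {p : ℝ}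
    (hp : ∀ x, ‖∇ U x‖ = p) (x : E) (s : ℝ) : U (x + s • ∇ U x) = U x + s * p ^ 2 := by
  have hacc (z : E) : hessianGradient U z = 0 := by
    have h := hasGradientAt_norm_gradient_sq hU z
    simp_rw [hp] at h
    simpa using h.unique (hasGradientAt_const z _)
  have hderiv (t : ℝ) : HasDerivAt (fun t : ℝ => U (x + t • ∇ U x) - t * p ^ 2) 0 t := by
    have hUx := ((hU.differentiable two_ne_zero) (x + t • ∇ U x)).hasGradientAt
    refine ((hasDerivAt_comp_line hUx).sub ((hasDerivAt_id t).mul_const (p ^ 2))).congr_deriv ?_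
    rw [gradient_add_smul_gradient_of_hessianGradient_eq_zero hU hacc, real_inner_self_eq_norm_sq,
      hp]
    ring
  have h := is_const_of_deriv_eq_zero (fun t => (hderiv t).differentiableAt)
    (fun t => (hderiv t).deriv) s 0
  simp only [zero_smul, add_zero, zero_mul, sub_zero] at h
  linarith

lemma gradient_eq_of_norm_gradient_eq (hU : ContDiff ℝ 2 U) {p : ℝ} (hp : ∀ x, ‖∇ U x‖ = p)
    (x y : E) : ∇ U x = ∇ U y := by
  have hp0 : 0 ≤ p := hp x ▸ norm_nonneg _
  -- Compare `U` at two points moving apart along the streamlines through `x` and `y`.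
  have hgrowth (t : ℝ) (ht : 0 ≤ t) :
      t * (2 * p ^ 2 - p * ‖∇ U x + ∇ U y‖) ≤ p * ‖x - y‖ + U y - U x := by
    have hlip := sub_le_mul_norm_of_norm_gradient_le convex_univ (hU.differentiable two_ne_zero)
      (fun z _ => (hp z).le) (Set.mem_univ (x + t • ∇ U x)) (Set.mem_univ (y + (-t) • ∇ U y))
    simp only [apply_add_smul_gradient_of_norm_gradient_eq hU hp] at hlip
    have hdist : ‖x + t • ∇ U x - (y + (-t) • ∇ U y)‖ ≤ ‖x - y‖ + t * ‖∇ U x + ∇ U y‖ := by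
      calc _ = ‖(x - y) + t • (∇ U x + ∇ U y)‖ := by congr 1; module
        _ ≤ _ := (norm_add_le _ _).trans_eq (by rw [norm_smul, Real.norm_of_nonneg ht])
    nlinarith
  have hle : 2 * p ^ 2 - p * ‖∇ U x + ∇ U y‖ ≤ 0 := by
    by_contra! hpos
    obtain ⟨n, hn⟩ := Archimedean.arch (p * ‖x - y‖ + U y - U x + 1) hpos
    have := hgrowth n n.cast_nonneg
    rw [nsmul_eq_mul] at hn
    linarith
  have hparallelogram := parallelogram_law_with_norm ℝ (∇ U x) (∇ U y)
  simp only [hp] at hparallelogram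
  have hzero : ‖∇ U x - ∇ U y‖ ^ 2 ≤ 0 := by
    rcases hp0.eq_or_lt with rfl | hpos
    · nlinarith [sq_nonneg ‖∇ U x + ∇ U y‖]
    · have : 2 * p ≤ ‖∇ U x + ∇ U y‖ := le_of_mul_le_mul_left (by linarith) hpos
      nlinarith
  exact sub_eq_zero.1 (norm_eq_zero.1 (pow_eq_zero_iff two_ne_zero |>.1
    (hzero.antisymm (sq_nonneg _))))

end Eikonal

section LevelCurvature

/-- The level curve of `w` through each point `z` has curvature `‖∇w(z)‖`. This is expressed by the
second derivative of `w` in the tangential direction `i∇w(z)`, so that `w` need not be `C²`. -/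
structure LevelCurvatureEq (w : ℂ → ℝ) : Prop where
  contDiff : ContDiff ℝ 1 w
  tangential (z : ℂ) : HasSecondDerivAt (fun t : ℝ => w (z + t • (Complex.I * ∇ w z))) 0
    (-‖∇ w z‖ ^ 4) 0

lemma exists_I_mul_eq_smul_of_inner_eq_zero {a b : ℂ} (hb : b ≠ 0) (hab : ⟪a, b⟫ = 0) :
    ∃ c : ℝ, Complex.I * a = c • b := by
  have him : (Complex.I * a / b).im = 0 := by
    rw [Complex.inner] at hab
    simp only [Complex.mul_re, Complex.conj_re, Complex.conj_im] at hab
    rw [Complex.div_im, ← sub_div, Complex.I_mul_im, Complex.I_mul_re, div_eq_zero_iff]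
    left
    linarith
  refine ⟨(Complex.I * a / b).re, ?_⟩
  rw [Complex.real_smul, show ((Complex.I * a / b).re : ℂ) = Complex.I * a / b from
    Complex.ext rfl him.symm, div_mul_cancel₀ _ hb]

lemma IsInftyHarmonic.levelCurvatureEq_log_norm_gradient {U : ℂ → ℝ} (hU : IsInftyHarmonic U)
    (hne : ∀ z, ∇ U z ≠ 0) : LevelCurvatureEq fun z => Real.log ‖∇ U z‖ where
  contDiff := ((contDiff_gradient_s18 (n := 1) hU.contDiff).norm ℝ hne).log
    fun z => norm_ne_zero_iff.2 (hne z)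
  tangential z := by
    set w : ℂ → ℝ := fun z => Real.log ‖∇ U z‖
    have hw : ∇ w z = (‖∇ U z‖ ^ 2)⁻¹ • hessianGradient U z :=
      (hasGradientAt_log_norm_gradient hU.contDiff (hne z)).gradient
    obtain ⟨c, hc⟩ : ∃ c : ℝ, Complex.I * ∇ w z = c • ∇ U z :=
      exists_I_mul_eq_smul_of_inner_eq_zero (hne z) (by
        rw [hw, real_inner_smul_left, hU.inner_eq_zero, mul_zero])
    have hnorm : ‖∇ w z‖ ^ 2 = c ^ 2 * ‖∇ U z‖ ^ 2 := by
      have h := congrArg (fun a => ‖a‖ ^ 2) hc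
      simpa [mul_pow] using h
    have hnorm' : ‖∇ w z‖ ^ 2 = ‖hessianGradient U z‖ ^ 2 / ‖∇ U z‖ ^ 4 := by
      rw [hw, norm_smul]
      simp only [norm_inv, norm_pow, norm_norm]
      ring
    have hz : ‖∇ U z‖ ≠ 0 := norm_ne_zero_iff.2 (hne z)
    have h := (((hU.hasSecondDerivAt_norm_gradient_sq z).log (by simpa using hne z)).div_const
      2).comp_const_mul c
    convert h using 1
    · ext t
      simp only [w, hc, smul_smul, mul_comm c, Real.log_pow]
      push_cast
      ring
    · simp
    · calc -‖∇ w z‖ ^ 4 = -(‖∇ w z‖ ^ 2 * ‖∇ w z‖ ^ 2) := by ring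
        _ = _ := by
          nth_rewrite 1 [hnorm]
          rw [hnorm']
          simp only [neg_mul, zero_smul, add_zero, zero_div, zero_pow two_ne_zero, sub_zero]
          field

lemma LevelCurvatureEq.rescale {w : ℂ → ℝ} (hw : LevelCurvatureEq w) (a : ℂ) (c : ℝ) :
    LevelCurvatureEq fun z => w (a + c • z) where
  contDiff := hw.contDiff.comp (by fun_prop)
  tangential z := by
    have hgrad := (hasGradientAt_comp_add_smul
      (hw.contDiff.differentiable one_ne_zero (a + c • z)).hasGradientAt).gradient
    have h := (hw.tangential (a + c • z)).comp_const_mul (c ^ 2)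
    rw [hgrad]
    convert h using 1
    · ext t
      congr 1
      simp only [Complex.real_smul, smul_add, Complex.ofReal_mul, Complex.ofReal_pow]
      ring
    · simp
    · rw [norm_smul, mul_pow, Real.norm_eq_abs, Even.pow_abs (by decide)]
      ring

end LevelCurvature

section Doubling

variable {E : Type*} [NormedAddCommGroup E] [InnerProductSpace ℝ E]

/-- The penalty subtracted from `w x - w y` in the doubling of variables. Its leading part
`‖x - y‖ / 2` leaves room for maxima off the diagonal when `w` has a gradient longer than `1 / 2`,
and the term with the small parameter `ε` keeps the maximum points bounded. -/
noncomputable def doublingPenalty (ε : ℝ) (x y : E) : ℝ :=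
  ‖x - y‖ * (1 / 2 + ε * (‖x‖ ^ 2 + ‖y‖ ^ 2))

lemma norm_add_smul_le_quadratic {a : E} (ha : a ≠ 0) (b : E) (t : ℝ) :
    ‖a + t • b‖ ≤ ‖a‖ + ⟪a, b⟫ / ‖a‖ * t + ‖b‖ ^ 2 / (2 * ‖a‖) * t ^ 2 := by
  calc ‖a + t • b‖ ≤ (‖a‖ ^ 2 + ‖a + t • b‖ ^ 2) / (2 * ‖a‖) := by
        rw [le_div_iff₀ (by positivity)]
        linarith [two_mul_le_add_sq ‖a‖ ‖a + t • b‖]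
    _ = _ := by
        rw [norm_add_smul_sq]
        field

variable {ε : ℝ} {x y : E}

lemma doublingPenalty_add_smul_le (hε : 0 ≤ ε) (hxy : x ≠ y) (ξ η : E) (t : ℝ) :
    doublingPenalty ε (x + t • ξ) (y + t • η) ≤
      (‖x - y‖ + ⟪x - y, ξ - η⟫ / ‖x - y‖ * t + ‖ξ - η‖ ^ 2 / (2 * ‖x - y‖) * t ^ 2) *
        (1 / 2 + ε * (‖x‖ ^ 2 + ‖y‖ ^ 2) + 2 * ε * (⟪x, ξ⟫ + ⟪y, η⟫) * t
          + ε * (‖ξ‖ ^ 2 + ‖η‖ ^ 2) * t ^ 2) := by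
  calc doublingPenalty ε (x + t • ξ) (y + t • η)
      = ‖x - y + t • (ξ - η)‖ * (1 / 2 + ε * (‖x + t • ξ‖ ^ 2 + ‖y + t • η‖ ^ 2)) := by
        rw [doublingPenalty, smul_sub, add_sub_add_comm]
    _ ≤ (‖x - y‖ + ⟪x - y, ξ - η⟫ / ‖x - y‖ * t + ‖ξ - η‖ ^ 2 / (2 * ‖x - y‖) * t ^ 2) *
          (1 / 2 + ε * (‖x + t • ξ‖ ^ 2 + ‖y + t • η‖ ^ 2)) := by
        gcongr
        exact norm_add_smul_le_quadratic (sub_ne_zero.2 hxy) _ _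
    _ = _ := by
        rw [norm_add_smul_sq, norm_add_smul_sq]
        ring

/-- `(x, y)` is a local maximum, off the diagonal, of `w x - w y` with the doubling penalty
subtracted. -/
structure IsDoublingMax (w : E → ℝ) (ε : ℝ) (x y : E) : Prop where
  nonneg : 0 ≤ ε
  ne : x ≠ y
  isLocalMax : IsLocalMax (fun p : E × E => w p.1 - w p.2 - doublingPenalty ε p.1 p.2) (x, y)

namespace IsDoublingMax

variable {w : E → ℝ}

lemma isLocalMax_sub_quadratic_mul_quadratic (hmax : IsDoublingMax w ε x y) (ξ η : E) :
    IsLocalMax (fun t : ℝ => w (x + t • ξ) - w (y + t • η) -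
      (‖x - y‖ + ⟪x - y, ξ - η⟫ / ‖x - y‖ * t + ‖ξ - η‖ ^ 2 / (2 * ‖x - y‖) * t ^ 2) *
        (1 / 2 + ε * (‖x‖ ^ 2 + ‖y‖ ^ 2) + 2 * ε * (⟪x, ξ⟫ + ⟪y, η⟫) * t
          + ε * (‖ξ‖ ^ 2 + ‖η‖ ^ 2) * t ^ 2)) 0 := by
  have hline : Tendsto (fun t : ℝ => (x + t • ξ, y + t • η)) (𝓝 0) (𝓝 (x, y)) := by
    have h : Continuous fun t : ℝ => (x + t • ξ, y + t • η) := by fun_prop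
    simpa using h.tendsto 0
  filter_upwards [hline.eventually hmax.isLocalMax] with t ht
  have := doublingPenalty_add_smul_le hmax.nonneg hmax.ne ξ η t
  simp only [doublingPenalty, zero_smul, add_zero, mul_zero, zero_pow two_ne_zero] at ht this ⊢
  linarith

lemma sub_le_second_variation (hmax : IsDoublingMax w ε x y) {ξ η : E}
    {a a' b b' : ℝ} (ha : HasSecondDerivAt (fun t : ℝ => w (x + t • ξ)) a' a 0)
    (hb : HasSecondDerivAt (fun t : ℝ => w (y + t • η)) b' b 0) :
    a - b ≤ ‖ξ - η‖ ^ 2 / ‖x - y‖ * (1 / 2 + ε * (‖x‖ ^ 2 + ‖y‖ ^ 2))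
      + 4 * ε * (⟪x - y, ξ - η⟫ / ‖x - y‖) * (⟪x, ξ⟫ + ⟪y, η⟫)
      + 2 * ε * ‖x - y‖ * (‖ξ‖ ^ 2 + ‖η‖ ^ 2) := by
  have h := ((ha.sub hb).sub ((hasSecondDerivAt_quadratic _ _ _).mul
    (hasSecondDerivAt_quadratic _ _ _))).nonpos_of_isLocalMax
    (hmax.isLocalMax_sub_quadratic_mul_quadratic ξ η)
  have hD : 2 * (‖ξ - η‖ ^ 2 / (2 * ‖x - y‖)) = ‖ξ - η‖ ^ 2 / ‖x - y‖ := by field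
  simp only [mul_zero, add_zero, ne_eq, OfNat.ofNat_ne_zero, not_false_eq_true, zero_pow, hD] at h
  linarith

variable [CompleteSpace E]

lemma inner_gradient_sub_inner_gradient (hmax : IsDoublingMax w ε x y)
    (hw : Differentiable ℝ w) (ξ η : E) :
    ⟪∇ w x, ξ⟫ - ⟪∇ w y, η⟫ =
      (1 / 2 + ε * (‖x‖ ^ 2 + ‖y‖ ^ 2)) / ‖x - y‖ * ⟪x - y, ξ - η⟫
        + 2 * ε * ‖x - y‖ * (⟪x, ξ⟫ + ⟪y, η⟫) := by
  have hline (z v : E) : HasDerivAt (fun t : ℝ => w (z + t • v)) ⟪∇ w z, v⟫ 0 :=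
    hasDerivAt_comp_line (by simpa using (hw z).hasGradientAt)
  have h := (hmax.isLocalMax_sub_quadratic_mul_quadratic ξ η).hasDerivAt_eq_zero
    (((hline x ξ).sub (hline y η)).sub ((hasSecondDerivAt_quadratic _ _ _).mul
    (hasSecondDerivAt_quadratic _ _ _)).hasDerivAt)
  simp only [mul_zero, add_zero, ne_eq, OfNat.ofNat_ne_zero, not_false_eq_true, zero_pow] at h
  linear_combination h

lemma gradient_fst (hmax : IsDoublingMax w ε x y) (hw : Differentiable ℝ w) :
    ∇ w x = ((1 / 2 + ε * (‖x‖ ^ 2 + ‖y‖ ^ 2)) / ‖x - y‖) • (x - y) + (2 * ε * ‖x - y‖) • x := by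
  refine ext_inner_right ℝ fun v => ?_
  have h := hmax.inner_gradient_sub_inner_gradient hw v 0
  simpa only [inner_zero_right, sub_zero, add_zero, inner_add_left, real_inner_smul_left] using h

lemma gradient_snd (hmax : IsDoublingMax w ε x y) (hw : Differentiable ℝ w) :
    ∇ w y = ((1 / 2 + ε * (‖x‖ ^ 2 + ‖y‖ ^ 2)) / ‖x - y‖) • (x - y) - (2 * ε * ‖x - y‖) • y := by
  refine ext_inner_right ℝ fun v => ?_
  have h := hmax.inner_gradient_sub_inner_gradient hw 0 v
  simp only [inner_zero_right, zero_sub, zero_add, inner_neg_right] at h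
  rw [inner_sub_left (𝕜 := ℝ), real_inner_smul_left, real_inner_smul_left]
  linarith

lemma norm_gradient_sub_gradient_le (hmax : IsDoublingMax w ε x y) (hw : Differentiable ℝ w) :
    ‖∇ w x - ∇ w y‖ ≤ 2 * ε * ‖x - y‖ * (‖x‖ + ‖y‖) := by
  have hε := hmax.nonneg
  calc ‖∇ w x - ∇ w y‖ = ‖(2 * ε * ‖x - y‖) • (x + y)‖ := by
        rw [hmax.gradient_fst hw, hmax.gradient_snd hw]
        congr 1
        module
    _ ≤ _ := by
        rw [norm_smul, Real.norm_of_nonneg (by positivity)]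
        gcongr
        exact norm_add_le x y

lemma half_le_norm_gradient (hmax : IsDoublingMax w ε x y) (hw : Differentiable ℝ w) :
    1 / 2 ≤ ‖∇ w y‖ := by
  have hε := hmax.nonneg
  have hr : 0 < ‖x - y‖ := norm_sub_pos_iff.2 hmax.ne
  have hinner : ⟪∇ w y, x - y⟫ = (1 / 2 + ε * (‖x - y‖ ^ 2 + 2 * ‖y‖ ^ 2)) * ‖x - y‖ := by
    rw [hmax.gradient_snd hw, inner_sub_left, real_inner_smul_left,
      real_inner_smul_left, real_inner_self_eq_norm_sq, inner_sub_right,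
      real_inner_self_eq_norm_sq]
    have := norm_sub_sq_real x y
    rw [real_inner_comm] at this
    field_simp
    linear_combination (-2 * ε) * this
  refine le_of_mul_le_mul_right ?_ hr
  calc 1 / 2 * ‖x - y‖ ≤ (1 / 2 + ε * (‖x - y‖ ^ 2 + 2 * ‖y‖ ^ 2)) * ‖x - y‖ := by
        gcongr
        exact le_add_of_nonneg_right (by positivity)
    _ ≤ ‖∇ w y‖ * ‖x - y‖ := hinner ▸ real_inner_le_norm _ _

end IsDoublingMax

lemma second_variation_le {k : ℝ} (hk : 1 ≤ k) (hxy : x ≠ y) (hx : ‖x‖ ≤ k ^ 2) (hy : ‖y‖ ≤ k ^ 2)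
    {ξ η : E} (hξ : ‖ξ‖ ≤ 2) (hη : ‖η‖ ≤ 6 * k) (hξη : ‖ξ - η‖ ≤ 3 / k * ‖x - y‖) :
    ‖ξ - η‖ ^ 2 / ‖x - y‖ * (1 / 2 + 2 / k ^ 4 * (‖x‖ ^ 2 + ‖y‖ ^ 2))
      + 4 * (2 / k ^ 4) * (⟪x - y, ξ - η⟫ / ‖x - y‖) * (⟪x, ξ⟫ + ⟪y, η⟫)
      + 2 * (2 / k ^ 4) * ‖x - y‖ * (‖ξ‖ ^ 2 + ‖η‖ ^ 2) ≤ 400 / k ^ 2 * ‖x - y‖ := by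
  have hr : 0 < ‖x - y‖ := norm_sub_pos_iff.2 hxy
  have hk0 : 0 < k := by linarith
  have hcurv : ‖ξ - η‖ ^ 2 / ‖x - y‖ * (1 / 2 + 2 / k ^ 4 * (‖x‖ ^ 2 + ‖y‖ ^ 2))
      ≤ 41 / k ^ 2 * ‖x - y‖ := by
    calc _ ≤ (3 / k * ‖x - y‖) ^ 2 / ‖x - y‖ *
          (1 / 2 + 2 / k ^ 4 * ((k ^ 2) ^ 2 + (k ^ 2) ^ 2)) := by gcongr
      _ = 81 / 2 / k ^ 2 * ‖x - y‖ := by field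
      _ ≤ _ := by gcongr; norm_num
  have hσ : |⟪x, ξ⟫ + ⟪y, η⟫| ≤ 8 * k ^ 3 := by
    calc _ ≤ ‖x‖ * ‖ξ‖ + ‖y‖ * ‖η‖ := (abs_add_le _ _).trans
          (add_le_add (abs_real_inner_le_norm _ _) (abs_real_inner_le_norm _ _))
      _ ≤ k ^ 2 * 2 + k ^ 2 * (6 * k) := by gcongr
      _ ≤ 8 * k ^ 3 := by nlinarith [pow_pos hk0 2]
  have hβ : |⟪x - y, ξ - η⟫ / ‖x - y‖| ≤ 3 / k * ‖x - y‖ := by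
    rw [abs_div, abs_norm, div_le_iff₀ hr, mul_comm _ ‖x - y‖]
    exact (abs_real_inner_le_norm _ _).trans (by gcongr)
  have hcross : 4 * (2 / k ^ 4) * (⟪x - y, ξ - η⟫ / ‖x - y‖) * (⟪x, ξ⟫ + ⟪y, η⟫)
      ≤ 192 / k ^ 2 * ‖x - y‖ := by
    rw [mul_assoc]
    calc _ ≤ 4 * (2 / k ^ 4) * ((3 / k * ‖x - y‖) * (8 * k ^ 3)) := by
          refine mul_le_mul_of_nonneg_left ((le_abs_self _).trans ?_) (by positivity)
          rw [abs_mul]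
          gcongr
      _ = _ := by field
  have hconf : 2 * (2 / k ^ 4) * ‖x - y‖ * (‖ξ‖ ^ 2 + ‖η‖ ^ 2) ≤ 160 / k ^ 2 * ‖x - y‖ := by
    calc _ ≤ 2 * (2 / k ^ 4) * ‖x - y‖ * (2 ^ 2 + (6 * k) ^ 2) := by gcongr
      _ ≤ 2 * (2 / k ^ 4) * ‖x - y‖ * (40 * k ^ 2) := by gcongr; nlinarith
      _ = _ := by field
  calc _ ≤ 41 / k ^ 2 * ‖x - y‖ + 192 / k ^ 2 * ‖x - y‖ + 160 / k ^ 2 * ‖x - y‖ := by gcongr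
    _ = 393 / k ^ 2 * ‖x - y‖ := by ring
    _ ≤ _ := by gcongr; norm_num

variable {w : E → ℝ}

lemma exists_pos_sub_sub_doublingPenalty_zero [CompleteSpace E] (hw : Differentiable ℝ w)
    (h0 : 1 / 2 < ‖∇ w 0‖) (ε : ℝ) {N : ℝ} (hN : 0 < N) :
    ∃ x, ‖x‖ < N ∧ 0 < w x - w 0 - doublingPenalty ε x 0 := by
  set v := ∇ w 0
  have hderiv : HasDerivAt (fun t : ℝ => w (0 + t • v) - w 0
      - (0 + ‖v‖ * t + 0 * t ^ 2) * (1 / 2 + 0 * t + ε * ‖v‖ ^ 2 * t ^ 2))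
      (‖v‖ * (‖v‖ - 1 / 2)) 0 := by
    have hline : HasDerivAt (fun t : ℝ => w (0 + t • v)) ⟪v, v⟫ 0 :=
      hasDerivAt_comp_line (by simpa using (hw 0).hasGradientAt)
    have h := (hline.sub_const (w 0)).sub
      ((hasSecondDerivAt_quadratic 0 ‖v‖ 0).mul
        (hasSecondDerivAt_quadratic (1 / 2) 0 (ε * ‖v‖ ^ 2))).hasDerivAt
    refine h.congr_deriv ?_
    rw [real_inner_self_eq_norm_sq]
    ring
  have hsign := eventually_nhdsWithin_sign_eq_of_deriv_pos (x₀ := 0)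
    (hderiv.deriv ▸ mul_pos (by linarith) (by linarith)) (by simp)
  have hsmall : ∀ᶠ t : ℝ in 𝓝 0, ‖t • v‖ < N :=
    (by fun_prop : Continuous fun t : ℝ => ‖t • v‖).continuousAt.eventually_lt_const (by simpa)
  obtain ⟨t, ⟨hsign_t, htN⟩, ht⟩ := (((hsign.and hsmall).filter_mono
    (nhdsWithin_le_nhds (s := Set.Ioi 0))).and eventually_mem_nhdsWithin).exists
  rw [Set.mem_Ioi] at ht
  rw [sub_zero, sign_pos ht, sign_eq_one_iff] at hsign_t
  refine ⟨t • v, htN, hsign_t.trans_eq ?_⟩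
  simp only [doublingPenalty, sub_zero, norm_zero, norm_smul, Real.norm_of_nonneg ht.le, zero_add]
  ring

lemma exists_isDoublingMax [ProperSpace E] (hw : Differentiable ℝ w) (h0 : 1 / 2 < ‖∇ w 0‖) {N : ℝ}
    (hN : 0 < N) (hball : ∀ z ∈ Metric.closedBall 0 N, ‖∇ w z‖ ≤ 2) :
    ∃ x y, ‖x‖ ≤ N ∧ ‖y‖ ≤ N ∧ IsDoublingMax w (2 / N ^ 2) x y := by
  set f : E × E → ℝ := fun p => w p.1 - w p.2 - doublingPenalty (2 / N ^ 2) p.1 p.2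
  have hf : Continuous f := by
    have := hw.continuous
    unfold f doublingPenalty
    fun_prop
  set K : Set (E × E) := Metric.closedBall 0 N ×ˢ Metric.closedBall 0 N
  set O : Set (E × E) := (Metric.ball 0 N ×ˢ Metric.ball 0 N) ∩ {p | 0 < f p}
  obtain ⟨x₀, hx₀, hpos⟩ := exists_pos_sub_sub_doublingPenalty_zero hw h0 (2 / N ^ 2) hN
  have hfO : ∀ p ∈ K \ O, f p < f (x₀, 0) := by
    rintro ⟨x, y⟩ ⟨⟨hx, hy⟩, hO⟩
    refine lt_of_le_of_lt ?_ hpos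
    by_contra! hxy
    have hlip := sub_le_mul_norm_of_norm_gradient_le (convex_closedBall 0 N) hw hball hx hy
    -- Since `w` is `2`-Lipschitz on the ball, `f` is nonpositive where `N ≤ ‖x‖` or `N ≤ ‖y‖`.
    have hlt : ‖x‖ ^ 2 + ‖y‖ ^ 2 < N ^ 2 := by
      by_contra! hle
      have : 2 ≤ 2 / N ^ 2 * (‖x‖ ^ 2 + ‖y‖ ^ 2) := by
        rw [div_mul_eq_mul_div, le_div_iff₀ (by positivity)]
        linarith
      simp only [f, doublingPenalty] at hxy
      nlinarith [norm_nonneg (x - y)]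
    refine hO ⟨⟨?_, ?_⟩, hxy⟩ <;> rw [mem_ball_zero_iff] <;>
      exact lt_of_pow_lt_pow_left₀ 2 hN.le (by linarith [sq_nonneg ‖x‖, sq_nonneg ‖y‖])
  obtain ⟨⟨x, y⟩, ⟨⟨hx, hy⟩, hxy⟩, hmax⟩ := ((isCompact_closedBall 0 N).prod
    (isCompact_closedBall 0 N)).exists_isLocalMax_mem_open (s := O) (z := (x₀, 0))
    (Set.inter_subset_left.trans (Set.prod_mono Metric.ball_subset_closedBall
      Metric.ball_subset_closedBall)) hf.continuousOn (by simp [hx₀.le, hN.le]) hfO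
    ((Metric.isOpen_ball.prod Metric.isOpen_ball).inter (isOpen_lt continuous_const hf))
  refine ⟨x, y, (mem_ball_zero_iff.1 hx).le, (mem_ball_zero_iff.1 hy).le, by positivity, ?_, hmax⟩
  rintro rfl
  simp [f, doublingPenalty] at hxy

end Doubling

section Liouville

lemma error_lt_gain {k r X Y : ℝ} (hk : 10 ^ 4 ≤ k) (hr : 0 < r) (hX : |X| ≤ 2) (hY : |Y| ≤ 2)
    (hY' : 1 / 2 ≤ Y) (hXY : |X - Y| ≤ 8 / k ^ 2 * r) :
    400 / k ^ 2 * r < (1 + r / k) ^ 2 * Y ^ 4 - X ^ 4 := by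
  have hk0 : 0 < k := by linarith
  have hquartic : X ^ 4 - Y ^ 4 ≤ 256 / k ^ 2 * r := by
    calc X ^ 4 - Y ^ 4 = (X - Y) * ((X + Y) * (X ^ 2 + Y ^ 2)) := by ring
      _ ≤ |X - Y| * ((|X| + |Y|) * (|X| ^ 2 + |Y| ^ 2)) := by
        rw [← sq_abs X, ← sq_abs Y]
        refine (le_abs_self _).trans ?_
        rw [abs_mul, abs_mul, abs_of_nonneg (by positivity : 0 ≤ |X| ^ 2 + |Y| ^ 2)]
        gcongr
        exact abs_add_le X Y
      _ ≤ 8 / k ^ 2 * r * ((2 + 2) * (2 ^ 2 + 2 ^ 2)) := by gcongr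
      _ = _ := by ring
  have hgain : r / (8 * k) ≤ ((1 + r / k) ^ 2 - 1) * Y ^ 4 := by
    calc r / (8 * k) = 2 * (r / k) * (1 / 2) ^ 4 := by field
      _ ≤ (2 * (r / k) + (r / k) ^ 2) * Y ^ 4 := by
        gcongr
        exact le_add_of_nonneg_right (by positivity)
      _ = _ := by ring
  have hscale : 656 / k ^ 2 * r < r / (8 * k) := by
    rw [div_mul_eq_mul_div, div_lt_div_iff₀ (by positivity) (by positivity)]
    nlinarith [mul_pos hr hk0]
  calc 400 / k ^ 2 * r = 656 / k ^ 2 * r - 256 / k ^ 2 * r := by ring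
    _ < ((1 + r / k) ^ 2 - 1) * Y ^ 4 - (X ^ 4 - Y ^ 4) := by linarith
    _ = _ := by ring

namespace LevelCurvatureEq

variable {w : ℂ → ℝ}

-- Moving `y` faster than `x` by the factor `1 + ‖x - y‖ / k` puts a gain of order `‖x - y‖ / k`
-- into the left-hand side, against an error of order `‖x - y‖ / k ^ 2`.
lemma sub_le_of_isDoublingMax (hw : LevelCurvatureEq w) {k : ℝ} (hk : 8 ≤ k) {x y : ℂ}
    (hmax : IsDoublingMax w (2 / k ^ 4) x y) (hx : ‖x‖ ≤ k ^ 2) (hy : ‖y‖ ≤ k ^ 2)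
    (hX : ‖∇ w x‖ ≤ 2) (hY : ‖∇ w y‖ ≤ 2) (hXY : ‖∇ w x - ∇ w y‖ ≤ 8 / k ^ 2 * ‖x - y‖) :
    (1 + ‖x - y‖ / k) ^ 2 * ‖∇ w y‖ ^ 4 - ‖∇ w x‖ ^ 4 ≤ 400 / k ^ 2 * ‖x - y‖ := by
  have hk0 : 0 < k := by linarith
  set r := ‖x - y‖
  have hrk : r ≤ 2 * k ^ 2 := (norm_sub_le x y).trans (by linarith)
  set l := 1 + r / k
  have hl : l ≤ 3 * k := by
    calc 1 + r / k ≤ 1 + 2 * k ^ 2 / k := by gcongr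
      _ = 1 + 2 * k := by field
      _ ≤ _ := by linarith
  set ξ := Complex.I * ∇ w x
  set η := l • (Complex.I * ∇ w y)
  have hξ : ‖ξ‖ ≤ 2 := by simpa [ξ] using hX
  have hη : ‖η‖ ≤ 6 * k := by
    calc ‖η‖ = l * ‖∇ w y‖ := by simp [η, abs_of_nonneg (by positivity : 0 ≤ l)]
      _ ≤ 3 * k * 2 := by gcongr
      _ = _ := by ring
  have hξη : ‖ξ - η‖ ≤ 3 / k * r := by
    calc ‖ξ - η‖ = ‖Complex.I * (∇ w x - ∇ w y) - (r / k) • (Complex.I * ∇ w y)‖ := by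
          simp only [ξ, η, l, add_smul, one_smul, mul_sub, sub_sub]
      _ ≤ 8 / k ^ 2 * r + r / k * 2 := by
          refine (norm_sub_le _ _).trans ?_
          rw [norm_smul, norm_mul, norm_mul, Complex.norm_I, one_mul, one_mul,
            Real.norm_of_nonneg (by positivity)]
          gcongr
      _ = (8 / k + 2) / k * r := by field
      _ ≤ 3 / k * r := by
          gcongr
          rw [← le_sub_iff_add_le, div_le_iff₀ hk0]
          linarith
  have hη' := (hw.tangential y).comp_const_mul l
  simp only [mul_comm l, mul_smul] at hη'
  have h := (hmax.sub_le_second_variation (hw.tangential x) hη').trans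
    (second_variation_le (by linarith) hmax.ne hx hy hξ hη hξη)
  linarith

lemma exists_two_lt_norm_gradient (hw : LevelCurvatureEq w) (h0 : 1 / 2 < ‖∇ w 0‖) {k : ℝ}
    (hk : 10 ^ 4 ≤ k) : ∃ z ∈ Metric.closedBall 0 (k ^ 2), 2 < ‖∇ w z‖ := by
  by_contra! hball
  have hk0 : 0 < k := by linarith
  have hdiff := hw.contDiff.differentiable one_ne_zero
  obtain ⟨x, y, hx, hy, hmax⟩ := exists_isDoublingMax hdiff h0 (pow_pos hk0 2) hball
  rw [← pow_mul] at hmax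
  have hX : ‖∇ w x‖ ≤ 2 := hball x (by simpa)
  have hY : ‖∇ w y‖ ≤ 2 := hball y (by simpa)
  have hXY : ‖∇ w x - ∇ w y‖ ≤ 8 / k ^ 2 * ‖x - y‖ := by
    calc _ ≤ 2 * (2 / k ^ 4) * ‖x - y‖ * (k ^ 2 + k ^ 2) :=
          (hmax.norm_gradient_sub_gradient_le hdiff).trans (by gcongr)
      _ = _ := by field
  refine (hw.sub_le_of_isDoublingMax (by linarith) hmax hx hy hX hY hXY).not_gt ?_
  exact error_lt_gain hk (norm_sub_pos_iff.2 hmax.ne) (by rwa [abs_norm]) (by rwa [abs_norm])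
    (hmax.half_le_norm_gradient hdiff) ((abs_norm_sub_norm_le _ _).trans hXY)

lemma gradient_eq_zero (hw : LevelCurvatureEq w) (z : ℂ) : ∇ w z = 0 := by
  by_contra hz
  have hgrad : Continuous (∇ w) :=
    (contDiff_gradient_s18 (n := 0) (by simpa using hw.contDiff)).continuous
  have hz' : 0 < ‖∇ w z‖ := norm_pos_iff.2 hz
  set N : ℝ := (10 ^ 4) ^ 2
  obtain ⟨ρ, hρ, a, -, -, hle, hball⟩ := hofer z (N / ‖∇ w z‖) (by positivity) hgrad.norm
    fun _ => norm_nonneg _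
  rw [div_mul_cancel₀ _ hz'.ne'] at hle
  have ha : 0 < ‖∇ w a‖ := pos_of_mul_pos_right (lt_of_lt_of_le (by positivity) hle) hρ.le
  set c := ‖∇ w a‖⁻¹
  have hrescaled (y : ℂ) : ∇ (fun y => w (a + c • y)) y = c • ∇ w (a + c • y) :=
    (hasGradientAt_comp_add_smul
      (hw.contDiff.differentiable one_ne_zero _).hasGradientAt).gradient
  obtain ⟨y, hy, hlt⟩ := (hw.rescale a c).exists_two_lt_norm_gradient (k := 10 ^ 4) (by
    rw [hrescaled, norm_smul, smul_zero, add_zero, norm_inv, norm_norm, inv_mul_cancel₀ ha.ne']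
    norm_num) le_rfl
  rw [hrescaled, norm_smul, norm_inv, norm_norm, lt_inv_mul_iff₀ ha, mul_comm] at hlt
  refine hlt.not_ge (hball _ ?_)
  rw [dist_self_add_right, norm_smul, norm_inv, norm_norm, inv_mul_le_iff₀ ha, mul_comm]
  exact (mem_closedBall_zero_iff.1 hy).trans hle

end LevelCurvatureEq

lemma IsInftyHarmonic.gradient_eq {U : ℂ → ℝ} (hU : IsInftyHarmonic U) (x y : ℂ) :
    ∇ U x = ∇ U y := by
  by_cases hzero : ∀ z, ∇ U z = 0
  · rw [hzero, hzero]
  obtain ⟨c, hc⟩ := not_forall.1 hzero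
  have hne := hU.gradient_ne_zero hc
  have hlog := hU.levelCurvatureEq_log_norm_gradient hne
  have hlog_const (z : ℂ) := eq_add_inner_of_gradient_eq (hlog.contDiff.differentiable one_ne_zero)
    hlog.gradient_eq_zero z
  refine gradient_eq_of_norm_gradient_eq hU.contDiff (p := ‖∇ U 0‖) (fun z => ?_) x y
  refine Real.log_injOn_pos (norm_pos_iff.2 (hne z)) (norm_pos_iff.2 (hne 0)) ?_
  simpa using hlog_const z

end Liouville

section Plane

open Complex (equivRealProdCLM)

lemma apply_eq_fst_mul_add_snd_mul (f : ℝ × ℝ →L[ℝ] ℝ) (v : ℝ × ℝ) :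
    f v = v.1 * f (1, 0) + v.2 * f (0, 1) := by
  have hv : v = v.1 • ((1, 0) : ℝ × ℝ) + v.2 • (0, 1) := by ext <;> simp
  nth_rewrite 1 [hv]
  simp only [map_add, map_smul, smul_eq_mul]

variable {u : ℝ × ℝ → ℝ}

lemma fderiv_uy_one_zero (hu : ContDiff ℝ 2 u) (p : ℝ × ℝ) :
    fderiv ℝ (uy u) p (1, 0) = uxy u p := by
  have hfderiv : DifferentiableAt ℝ (fderiv ℝ u) p :=
    (hu.fderiv_right (m := 1) le_rfl).differentiable one_ne_zero p
  have hsymm := (hu.contDiffAt (x := p)).isSymmSndFDerivAt (by simp)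
  have hsecond (v w : ℝ × ℝ) :
      fderiv ℝ (fun q => fderiv ℝ u q v) p w = fderiv ℝ (fderiv ℝ u) p w v := by
    simp [fderiv_clm_apply hfderiv (differentiableAt_const v)]
  exact (hsecond _ _).trans ((hsymm.eq _ _).trans (hsecond _ _).symm)

lemma gradient_comp_equivRealProdCLM (hu : Differentiable ℝ u) (z : ℂ) :
    ∇ (u ∘ equivRealProdCLM) z =
      equivRealProdCLM.symm (ux u (equivRealProdCLM z), uy u (equivRealProdCLM z)) := by
  refine HasGradientAt.gradient (hasGradientAt_iff_hasFDerivAt.2 ?_)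
  refine ((hu _).hasFDerivAt.comp z equivRealProdCLM.hasFDerivAt).congr_fderiv ?_
  ext v
  rw [ContinuousLinearMap.comp_apply, apply_eq_fst_mul_add_snd_mul]
  simp [Complex.inner, ux, uy]

lemma hessianGradient_comp_equivRealProdCLM (hu : ContDiff ℝ 2 u) (z : ℂ) :
    hessianGradient (u ∘ equivRealProdCLM) z =
      letI p := equivRealProdCLM z
      equivRealProdCLM.symm
        (ux u p * uxx u p + uy u p * uxy u p, ux u p * uxy u p + uy u p * uyy u p) := by
  have hgrad := funext (gradient_comp_equivRealProdCLM (hu.differentiable two_ne_zero))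
  have hfderiv : ContDiff ℝ 1 (fderiv ℝ u) := hu.fderiv_right le_rfl
  have hux : DifferentiableAt ℝ (ux u) (equivRealProdCLM z) :=
    (hfderiv.clm_apply contDiff_const).differentiable one_ne_zero _
  have huy : DifferentiableAt ℝ (uy u) (equivRealProdCLM z) :=
    (hfderiv.clm_apply contDiff_const).differentiable one_ne_zero _
  have hderiv := equivRealProdCLM.symm.hasFDerivAt.comp z
    ((hux.hasFDerivAt.prodMk huy.hasFDerivAt).comp z equivRealProdCLM.hasFDerivAt)
  rw [hessianGradient, hgrad]
  refine (DFunLike.congr_fun hderiv.fderiv _).trans ?_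
  simp only [ContinuousLinearMap.comp_apply, ContinuousLinearMap.prod_apply,
    ContinuousLinearEquiv.coe_coe, ContinuousLinearEquiv.apply_symm_apply]
  rw [apply_eq_fst_mul_add_snd_mul (fderiv ℝ (ux u) _),
    apply_eq_fst_mul_add_snd_mul (fderiv ℝ (uy u) _), fderiv_uy_one_zero hu]
  rfl

lemma isInftyHarmonic_comp_equivRealProdCLM (hu : ContDiff ℝ 2 u)
    (hinf : ∀ p : ℝ × ℝ,
      ux u p ^ 2 * uxx u p + 2 * ux u p * uy u p * uxy u p + uy u p ^ 2 * uyy u p = 0) :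
    IsInftyHarmonic (u ∘ equivRealProdCLM) where
  contDiff := hu.comp equivRealProdCLM.contDiff
  inner_eq_zero z := by
    rw [hessianGradient_comp_equivRealProdCLM hu,
      gradient_comp_equivRealProdCLM (hu.differentiable two_ne_zero), Complex.inner]
    simp only [Complex.equivRealProdCLM_apply, Complex.mul_re, Complex.conj_re, Complex.conj_im,
      Complex.equivRealProdCLM_symm_apply_re, Complex.equivRealProdCLM_symm_apply_im]
    linear_combination hinf (z.re, z.im)

end Plane

/-- **Aronsson**: every entire `C²` solution of the `∞`-Laplace equation
`u_x²u_xx + 2u_xu_yu_xy + u_y²u_yy = 0` over `ℝ²` is affine linear; i.e. the equation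
`L_{1,0}[u] = 0` has the Bernstein property. -/
theorem aronsson_infinity_laplace_bernstein (u : ℝ × ℝ → ℝ) (hu : ContDiff ℝ 2 u)
    (hinf : ∀ p : ℝ × ℝ,
      ux u p ^ 2 * uxx u p + 2 * ux u p * uy u p * uxy u p
        + uy u p ^ 2 * uyy u p = 0) :
    ∃ a b c : ℝ, ∀ x y : ℝ, u (x, y) = a * x + b * y + c := by
  have hU := isInftyHarmonic_comp_equivRealProdCLM hu hinf
  set U := u ∘ Complex.equivRealProdCLM
  refine ⟨(∇ U 0).re, (∇ U 0).im, U 0, fun x y => ?_⟩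
  calc u (x, y) = U ⟨x, y⟩ := rfl
    _ = U 0 + ⟪∇ U 0, ⟨x, y⟩⟫ := eq_add_inner_of_gradient_eq
      (hU.contDiff.differentiable two_ne_zero) (fun z => hU.gradient_eq z 0) _
    _ = _ := by
      rw [Complex.inner]
      simp only [Complex.mul_re, Complex.conj_re, Complex.conj_im]
      ring
end
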